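/- Let m ≥ 1 be an integer, let A_0, …, A_{m−1} > 1 and c_0, …, c_{m−1} > 0 be real numbers. Set β_{−1} = 1 and β_i = A_0·A_1⋯A_i for 0 ≤ i ≤ m−1, and put d_0 = s_{β_0} and d_i = g_{β_i, β_{i−1}} for 1 ≤ i ≤ m−1. Let S_m = { x ∈ (0,1) irrational : there are infinitely many n ∈ ℕ such that c_i·A_i^n ≤ a_{n+i}(x) < 2·c_i·A_i^n for every 0 ≤ i ≤ m−1 }. Then dim_H S_m = min_{0 ≤ i ≤ m−1} d_i. -/

import Mathlib

open Filter MeasureTheory Set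

/-- The Gauss map `T(x) = 1/x - ⌊1/x⌋`. -/
noncomputable def gaussMap (x : ℝ) : ℝ := 1 / x - (⌊1 / x⌋ : ℤ)

/-- The `n`-th partial quotient `a_n(x)` (for `n ≥ 1`) of the continued
fraction expansion of `x`: `a_n(x) = ⌊1 / T^{n-1}(x)⌋`. -/
noncomputable def pq (x : ℝ) (n : ℕ) : ℕ := ⌊1 / (gaussMap^[n - 1] x)⌋₊

/-- The continuant `q_n(a_1, …, a_n)`: `q_0 = 1`, `q_1 = a_1`,
`q_k = a_k q_{k-1} + q_{k-2}`. -/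
def contQ : (n : ℕ) → (Fin n → ℕ) → ℕ
  | 0, _ => 1
  | 1, a => a 0
  | (n + 2), a =>
      a (Fin.last (n + 1)) * contQ (n + 1) (Fin.init a) +
        contQ n (Fin.init (Fin.init a))

/-- `s_B`: the Wang–Wu pressure exponent. -/
noncomputable def sExp (B : ℝ) : ℝ :=
  sInf {s : ℝ | 0 ≤ s ∧
    Filter.atTop.limsup (fun n : ℕ =>
      (((n : ℝ)⁻¹ : ℝ) : EReal) * ENNReal.log (∑' a : Fin n → ℕ+,
        ENNReal.ofReal ((B ^ n * ((contQ n fun i => (a i : ℕ)) : ℝ) ^ 2) ^ (-s)))) ≤ 0}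

/-- `g_{B₁,B₂}`: the two-parameter pressure exponent. -/
noncomputable def gExp (B₁ B₂ : ℝ) : ℝ :=
  sInf {s : ℝ | 0 ≤ s ∧
    Filter.atTop.limsup (fun n : ℕ =>
      (((n : ℝ)⁻¹ : ℝ) : EReal) * ENNReal.log (∑' a : Fin n → ℕ+,
        ENNReal.ofReal (B₂ ^ ((1 - s) * (n : ℝ)) *
          (B₁ ^ n * ((contQ n fun i => (a i : ℕ)) : ℝ) ^ 2) ^ (-s)))) ≤ 0}

/-- `β_i = A_0 ⋯ A_i`. -/
noncomputable def betaProd (A : ℕ → ℝ) (i : ℕ) : ℝ := ∏ j ∈ Finset.range (i + 1), A j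

/-- The dimensional numbers `d_0 = s_{β_0}` and `d_i = g_{β_i, β_{i-1}}` for `i ≥ 1`. -/
noncomputable def dimNum (A : ℕ → ℝ) (i : ℕ) : ℝ :=
  if i = 0 then sExp (betaProd A 0) else gExp (betaProd A i) (betaProd A (i - 1))

/-!
Upper bound: a point of `S_m` lies, for infinitely many `n` and each fixed `i`, in one of the sets
given by a word of length `n`, a block of `i` digits which meet their thresholds, and a next digit
that is at least its threshold. If `q` is the continuant of the word, there are about `β_{i-1} ^ n`
such blocks, and each of these sets has diameter about `(β_{i-1} β_i) ^ (-n) * q ^ (-2)`. The sum of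
the `s`-th powers of the diameters is the pressure sum of `d_i`, so it converges for `s > d_i`, and
the Hausdorff–Cantelli lemma applies.

Lower bound: for `s < min d_i` choose a finite set of words of a large length `N` whose pressure
sums at all levels `i` exceed a constant. A random digit sequence is made of independent blocks of
length `N`: in a free block a word has probability proportional to `q ^ (-2 s)`, and in a forced
block the first `m` digits are uniform in their windows. The normalizing constants of the free
blocks multiply to an exponentially growing surplus of mass, faster than the cost of forcing a block
grows. So a block is forced as soon as the surplus pays for it, which happens infinitely often, and
the mass distribution principle at the exponent `s` applies to the law of the sequence.
-/

/-! ### Continuants -/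

/-- The continuant `q_n(a 0, …, a (n - 1))` of an initial segment of a sequence. -/
def continuant (a : ℕ → ℕ) : ℕ → ℕ
  | 0 => 1
  | 1 => a 0
  | (n + 2) => a (n + 1) * continuant a (n + 1) + continuant a n

/-- The continuant `q_{n-1}`, with the usual convention `q_{-1} = 0`. -/
def prevContinuant (a : ℕ → ℕ) : ℕ → ℕ
  | 0 => 0
  | (n + 1) => continuant a n

section Continuant

variable {a b : ℕ → ℕ}

lemma contQ_eq_continuant (a : ℕ → ℕ) : ∀ n : ℕ, contQ n (fun i => a i) = continuant a n
  | 0 => rfl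
  | 1 => rfl
  | (n + 2) => by
    rw [continuant, ← contQ_eq_continuant a (n + 1), ← contQ_eq_continuant a n]
    rfl

lemma continuant_succ (a : ℕ → ℕ) (n : ℕ) :
    continuant a (n + 1) = a n * continuant a n + prevContinuant a n := by
  cases n <;> simp [continuant, prevContinuant]

lemma continuant_congr : ∀ n : ℕ, (∀ k < n, a k = b k) → continuant a n = continuant b n
  | 0, _ => rfl
  | 1, h => h 0 one_pos
  | (n + 2), h => by
    rw [continuant, continuant, continuant_congr (n + 1) fun k hk => h k (by omega),
      continuant_congr n fun k hk => h k (by omega), h (n + 1) (by omega)]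

lemma continuant_mono (ha : ∀ k, 1 ≤ a k) : Monotone (continuant a) := by
  refine monotone_nat_of_le_succ fun n => ?_
  rw [continuant_succ]
  exact le_add_right (Nat.le_mul_of_pos_left _ (ha n))

lemma one_le_continuant (ha : ∀ k, 1 ≤ a k) (n : ℕ) : 1 ≤ continuant a n :=
  continuant_mono ha (Nat.zero_le n)

lemma continuant_pos (ha : ∀ k, 1 ≤ a k) (n : ℕ) : (0 : ℝ) < continuant a n :=
  Nat.cast_pos.mpr (one_le_continuant ha n)

lemma prevContinuant_le_continuant (ha : ∀ k, 1 ≤ a k) (n : ℕ) :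
    prevContinuant a n ≤ continuant a n := by
  cases n with
  | zero => exact Nat.zero_le _
  | succ n => exact continuant_mono ha n.le_succ

lemma le_continuant (ha : ∀ k, 1 ≤ a k) : ∀ n : ℕ, n ≤ continuant a n
  | 0 => Nat.zero_le _
  | 1 => one_le_continuant ha 1
  | (n + 2) => by
    have hn := le_continuant ha (n + 1)
    have hpos := one_le_continuant ha n
    rw [continuant]
    nlinarith [ha (n + 1)]

lemma continuant_succ_le (ha : ∀ k, 1 ≤ a k) (n : ℕ) :
    continuant a (n + 1) ≤ continuant a n * (a n + 1) := by
  rw [continuant_succ]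
  linarith [prevContinuant_le_continuant ha n]

lemma continuant_mul_le_succ (a : ℕ → ℕ) (n : ℕ) :
    continuant a n * a n ≤ continuant a (n + 1) := by
  rw [continuant_succ, mul_comm]
  exact Nat.le_add_right _ _

lemma continuant_add_le_mul_prod (ha : ∀ k, 1 ≤ a k) (n k : ℕ) :
    continuant a (n + k) ≤ continuant a n * ∏ j ∈ Finset.range k, (a (n + j) + 1) := by
  induction k with
  | zero => simp
  | succ k ih =>
    rw [Finset.prod_range_succ, ← mul_assoc]
    exact (continuant_succ_le ha (n + k)).trans (Nat.mul_le_mul_right _ ih)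

lemma mul_prod_le_continuant_add (a : ℕ → ℕ) (n k : ℕ) :
    continuant a n * ∏ j ∈ Finset.range k, a (n + j) ≤ continuant a (n + k) := by
  induction k with
  | zero => simp
  | succ k ih =>
    rw [Finset.prod_range_succ, ← mul_assoc]
    exact (Nat.mul_le_mul_right _ ih).trans (continuant_mul_le_succ a (n + k))

lemma continuant_add_le_two_mul (ha : ∀ k, 1 ≤ a k) (n : ℕ) : ∀ k : ℕ,
    continuant a (n + k) ≤ 2 * (continuant a n * continuant (fun j => a (n + j)) k)
  | 0 => by simp only [continuant, add_zero]; omega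
  | 1 => by
    have h := continuant_succ_le ha n
    simp only [continuant, add_zero]
    nlinarith [ha n, one_le_continuant ha n]
  | (k + 2) => by
    have h₁ := continuant_add_le_two_mul ha n (k + 1)
    have h₀ := continuant_add_le_two_mul ha n k
    rw [← add_assoc, continuant, continuant, add_assoc]
    nlinarith [Nat.mul_le_mul_left (a (n + (k + 1))) h₁]

end Continuant

/-! ### Finite continued fractions -/

/-- The finite continued fraction `[0; a 0, …, a (n - 1) + t]`, as a function of its tail `t`. -/
noncomputable def cfMap (a : ℕ → ℕ) : ℕ → ℝ → ℝ
  | 0, t => t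
  | (n + 1), t => cfMap a n (1 / (a n + t))

/-- The denominator `q_n + t q_{n-1}` of the Möbius map `cfMap a n`. -/
noncomputable def cfDenom (a : ℕ → ℕ) (n : ℕ) (t : ℝ) : ℝ :=
  continuant a n + t * prevContinuant a n

section CfMap

variable {a b : ℕ → ℕ} {t t' : ℝ}

lemma cfDenom_succ (ha : ∀ k, 1 ≤ a k) (n : ℕ) (ht : 0 ≤ t) :
    cfDenom a (n + 1) t = cfDenom a n (1 / (a n + t)) * (a n + t) := by
  have han : (0 : ℝ) < a n := Nat.cast_pos.mpr (ha n)
  have hne : (a n + t : ℝ) ≠ 0 := by positivity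
  rw [cfDenom, cfDenom, continuant_succ, prevContinuant]
  push_cast
  field_simp
  ring

lemma continuant_le_cfDenom (a : ℕ → ℕ) (n : ℕ) (ht : 0 ≤ t) :
    (continuant a n : ℝ) ≤ cfDenom a n t :=
  le_add_of_nonneg_right (by positivity)

lemma cfDenom_le_two_mul (ha : ∀ k, 1 ≤ a k) (n : ℕ) (ht : t ≤ 1) :
    cfDenom a n t ≤ 2 * (continuant a n : ℝ) := by
  have hprev : (prevContinuant a n : ℝ) ≤ continuant a n :=
    Nat.cast_le.mpr (prevContinuant_le_continuant ha n)
  have hmul : t * prevContinuant a n ≤ prevContinuant a n :=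
    mul_le_of_le_one_left (Nat.cast_nonneg _) ht
  rw [cfDenom]
  linarith

lemma cfDenom_pos (ha : ∀ k, 1 ≤ a k) (n : ℕ) (ht : 0 ≤ t) : 0 < cfDenom a n t :=
  (continuant_pos ha n).trans_le (continuant_le_cfDenom a n ht)

lemma abs_cfMap_sub (ha : ∀ k, 1 ≤ a k) (n : ℕ) : ∀ {t t' : ℝ}, 0 ≤ t → 0 ≤ t' →
    |cfMap a n t - cfMap a n t'| = |t - t'| / (cfDenom a n t * cfDenom a n t') := by
  induction n with
  | zero => intro t t' _ _; simp [cfMap, cfDenom, continuant, prevContinuant]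
  | succ n ih =>
    intro t t' ht ht'
    have han : (0 : ℝ) < a n := Nat.cast_pos.mpr (ha n)
    have hpos : (0 : ℝ) < (a n + t) * (a n + t') := by positivity
    have hD := cfDenom_pos ha n (t := 1 / (a n + t)) (by positivity)
    have hD' := cfDenom_pos ha n (t := 1 / (a n + t')) (by positivity)
    have hsub : (1 / (a n + t) - 1 / (a n + t') : ℝ) = -(t - t') / ((a n + t) * (a n + t')) := by
      field_simp
      ring
    rw [cfMap, cfMap, ih (by positivity) (by positivity), cfDenom_succ ha n ht,
      cfDenom_succ ha n ht', hsub, abs_div, abs_neg, abs_of_pos hpos]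
    field_simp

lemma abs_cfMap_sub_le (ha : ∀ k, 1 ≤ a k) (n : ℕ) (ht : 0 ≤ t) (ht' : 0 ≤ t') :
    |cfMap a n t - cfMap a n t'| ≤ |t - t'| / (continuant a n : ℝ) ^ 2 := by
  have hpos := continuant_pos ha n
  have hD := continuant_le_cfDenom a n ht
  have hD' := continuant_le_cfDenom a n ht'
  have hDpos := hpos.trans_le hD
  rw [abs_cfMap_sub ha n ht ht', sq]
  gcongr

lemma le_abs_cfMap_sub (ha : ∀ k, 1 ≤ a k) (n : ℕ) (ht : t ∈ Icc 0 1) (ht' : t' ∈ Icc 0 1) :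
    |t - t'| / (4 * (continuant a n : ℝ) ^ 2) ≤ |cfMap a n t - cfMap a n t'| := by
  have hD := cfDenom_le_two_mul ha n ht.2
  have hD' := cfDenom_le_two_mul ha n ht'.2
  have hDpos := cfDenom_pos ha n ht.1
  have hDpos' := cfDenom_pos ha n ht'.1
  have hmul : cfDenom a n t * cfDenom a n t' ≤ 4 * (continuant a n : ℝ) ^ 2 := by nlinarith
  rw [abs_cfMap_sub ha n ht.1 ht'.1]
  gcongr

lemma cfMap_congr (n : ℕ) : (∀ k < n, a k = b k) → ∀ t, cfMap a n t = cfMap b n t := by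
  induction n with
  | zero => exact fun _ _ => rfl
  | succ n ih =>
    intro h t
    rw [cfMap, cfMap, ih fun k hk => h k (by omega), h n n.lt_succ_self]

lemma cfMap_succ' (a : ℕ → ℕ) (n : ℕ) : ∀ t,
    cfMap a (n + 1) t = 1 / (a 0 + cfMap (fun k => a (k + 1)) n t) := by
  induction n with
  | zero => exact fun _ => rfl
  | succ n ih => intro t; rw [cfMap, ih]; rfl

lemma cfMap_add (a : ℕ → ℕ) (n k : ℕ) : ∀ t,
    cfMap a (n + k) t = cfMap a n (cfMap (fun j => a (n + j)) k t) := by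
  induction k with
  | zero => exact fun _ => rfl
  | succ k ih => intro t; rw [← add_assoc, cfMap, ih]; rfl

lemma one_div_add_mem_Icc {k : ℕ} (hk : 1 ≤ k) (ht : 0 ≤ t) :
    1 / ((k : ℝ) + t) ∈ Icc (0 : ℝ) 1 := by
  have hk' : (1 : ℝ) ≤ k := Nat.one_le_cast.mpr hk
  exact ⟨by positivity, div_le_one_of_le₀ (by linarith) (by linarith)⟩

lemma cfMap_mem_Icc (ha : ∀ k, 1 ≤ a k) (n : ℕ) : ∀ {t : ℝ}, t ∈ Icc 0 1 →
    cfMap a n t ∈ Icc 0 1 := by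
  induction n with
  | zero => exact id
  | succ n ih => exact fun ht => ih (one_div_add_mem_Icc (ha n) ht.1)

lemma measurable_cfMap {α : Type*} [MeasurableSpace α] {a : α → ℕ → ℕ}
    (ha : ∀ k, Measurable fun x => a x k) (n : ℕ) : ∀ {t : α → ℝ}, Measurable t →
    Measurable fun x => cfMap (a x) n (t x) := by
  induction n with
  | zero => exact id
  | succ n ih =>
    intro t ht
    have hcast : Measurable fun x => (a x n : ℝ) := measurable_from_top.comp (ha n)
    exact ih (measurable_const.div (hcast.add ht))

end CfMap

/-! ### Infinite continued fractions -/

/-- The value `[0; a 0, a 1, …]` of an infinite continued fraction; the limit exists when all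
`a k` are positive. -/
noncomputable def cfValue (a : ℕ → ℕ) : ℝ := limUnder atTop fun n => cfMap a n 0

section CfValue

variable {a b : ℕ → ℕ}

lemma tendsto_cfMap_cfValue (ha : ∀ k, 1 ≤ a k) :
    Tendsto (fun n => cfMap a n 0) atTop (nhds (cfValue a)) := by
  have hdist : ∀ n k, n ≤ k → dist (cfMap a n 0) (cfMap a k 0) ≤ (continuant a n : ℝ)⁻¹ := by
    intro n k hnk
    obtain ⟨i, rfl⟩ := Nat.exists_eq_add_of_le hnk
    have ht := cfMap_mem_Icc (a := fun j => a (n + j)) (fun _ => ha _) i unitInterval.zero_mem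
    have hone : (1 : ℝ) ≤ continuant a n := Nat.one_le_cast.mpr (one_le_continuant ha n)
    rw [cfMap_add, dist_comm, Real.dist_eq]
    refine (abs_cfMap_sub_le ha n ht.1 le_rfl).trans ?_
    rw [sub_zero, abs_of_nonneg ht.1, inv_eq_one_div]
    exact div_le_div₀ zero_le_one ht.2 (by positivity) (le_self_pow₀ hone two_ne_zero)
  have hinf : Tendsto (fun n => (continuant a n : ℝ)) atTop atTop :=
    tendsto_atTop_mono (fun n => Nat.cast_le.mpr (le_continuant ha n)) tendsto_natCast_atTop_atTop
  exact (cauchySeq_of_le_tendsto_0' _ hdist hinf.inv_tendsto_atTop).tendsto_limUnder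

lemma cfValue_mem_Icc (ha : ∀ k, 1 ≤ a k) : cfValue a ∈ Icc (0 : ℝ) 1 :=
  isClosed_Icc.mem_of_tendsto (tendsto_cfMap_cfValue ha) (Eventually.of_forall fun n =>
    cfMap_mem_Icc ha n unitInterval.zero_mem)

lemma cfValue_eq_one_div (ha : ∀ k, 1 ≤ a k) :
    cfValue a = 1 / (a 0 + cfValue fun k => a (k + 1)) := by
  have ha' : ∀ k, 1 ≤ a (k + 1) := fun k => ha _
  have hpos : (0 : ℝ) < a 0 := Nat.cast_pos.mpr (ha 0)
  have hnonneg := (cfValue_mem_Icc ha').1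
  refine tendsto_nhds_unique ((tendsto_add_atTop_iff_nat 1).mpr (tendsto_cfMap_cfValue ha)) ?_
  simp only [cfMap_succ']
  exact tendsto_const_nhds.div ((tendsto_cfMap_cfValue ha').const_add _) (by positivity)

lemma cfValue_mem_Ioo (ha : ∀ k, 1 ≤ a k) : cfValue a ∈ Ioo (0 : ℝ) 1 := by
  have hpos : ∀ {b : ℕ → ℕ}, (∀ k, 1 ≤ b k) → 0 < cfValue b := by
    intro b hb
    have hb₀ : (0 : ℝ) < b 0 := Nat.cast_pos.mpr (hb 0)
    have hnonneg := (cfValue_mem_Icc (a := fun k => b (k + 1)) fun _ => hb _).1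
    rw [cfValue_eq_one_div hb]
    positivity
  have ha₀ : (1 : ℝ) ≤ a 0 := Nat.one_le_cast.mpr (ha 0)
  have htail := hpos (b := fun k => a (k + 1)) fun _ => ha _
  refine ⟨hpos ha, ?_⟩
  rw [cfValue_eq_one_div ha, div_lt_one (by positivity)]
  linarith

lemma one_div_cfValue (ha : ∀ k, 1 ≤ a k) :
    1 / cfValue a = a 0 + cfValue fun k => a (k + 1) := by
  rw [cfValue_eq_one_div ha, one_div_one_div]

lemma gaussMap_cfValue (ha : ∀ k, 1 ≤ a k) :
    gaussMap (cfValue a) = cfValue fun k => a (k + 1) := by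
  have htail := cfValue_mem_Ioo (a := fun k => a (k + 1)) fun _ => ha _
  have hfloor : ⌊(a 0 + cfValue fun k => a (k + 1) : ℝ)⌋ = (a 0 : ℤ) := by
    rw [Int.floor_natCast_add, Int.floor_eq_zero_iff.mpr ⟨htail.1.le, htail.2⟩, add_zero]
  rw [gaussMap, one_div_cfValue ha, hfloor, Int.cast_natCast, add_sub_cancel_left]

lemma gaussMap_iterate_cfValue (ha : ∀ k, 1 ≤ a k) (n : ℕ) :
    gaussMap^[n] (cfValue a) = cfValue fun k => a (n + k) := by
  induction n with
  | zero => simp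
  | succ n ih =>
    rw [Function.iterate_succ_apply', ih, gaussMap_cfValue fun _ => ha _]
    simp only [add_assoc, add_comm 1]

lemma pq_cfValue (ha : ∀ k, 1 ≤ a k) (n : ℕ) : pq (cfValue a) (n + 1) = a n := by
  have htail := cfValue_mem_Ioo (a := fun k => a (n + (k + 1))) fun _ => ha _
  rw [pq, Nat.add_sub_cancel, gaussMap_iterate_cfValue ha, one_div_cfValue fun _ => ha _,
    add_comm, Nat.floor_add_natCast htail.1.le, Nat.floor_eq_zero.mpr htail.2, zero_add, add_zero]

lemma cfValue_eq_cfMap (ha : ∀ k, 1 ≤ a k) (n : ℕ) :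
    cfValue a = cfMap a n (cfValue fun k => a (n + k)) := by
  induction n with
  | zero => simp [cfMap]
  | succ n ih =>
    rw [cfMap, ih, cfValue_eq_one_div fun _ => ha _]
    simp only [add_assoc, add_comm 1, add_zero]

lemma cfValue_eq_cfMap_one_div (ha : ∀ k, 1 ≤ a k) (n : ℕ) :
    cfValue a = cfMap a n (1 / (a n + cfValue fun k => a (n + 1 + k))) :=
  cfValue_eq_cfMap ha (n + 1)

lemma measurable_cfValue {α : Type*} [MeasurableSpace α] {a : α → ℕ → ℕ}
    (ha : ∀ k, Measurable fun x => a x k) (hpos : ∀ x k, 1 ≤ a x k) :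
    Measurable fun x => cfValue (a x) :=
  measurable_of_tendsto_metrizable (f := fun n x => cfMap (a x) n 0)
    (fun n => measurable_cfMap ha n measurable_const)
    (tendsto_pi_nhds.mpr fun x => tendsto_cfMap_cfValue (hpos x))

/-- The dichotomy keeps the two tails from being close to `1` and `0` respectively, which is
the only way in which `k + cfValue a` and `l + cfValue b` can nearly coincide when `k < l`. -/
lemma div_le_add_cfValue_sub {M k l : ℕ} (ha : ∀ k, 1 ≤ a k) (hb : ∀ k, 1 ≤ b k) (hM : 1 ≤ M)
    (hkl : k < l) (hab : b 0 ≤ M ∨ 2 ≤ a 0) :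
    ((l : ℝ) - k) / (M + 1) ≤ (l + cfValue b) - (k + cfValue a) := by
  have hM' : (1 : ℝ) ≤ M := Nat.one_le_cast.mpr hM
  have hkl' : (k : ℝ) + 1 ≤ l := mod_cast hkl
  have ha₁ := (cfValue_mem_Ioo ha).2
  have hb₀ := (cfValue_mem_Ioo hb).1
  have htail_a := cfValue_mem_Ioo (a := fun k => a (k + 1)) fun _ => ha _
  have htail_b := cfValue_mem_Ioo (a := fun k => b (k + 1)) fun _ => hb _
  rw [div_le_iff₀ (by positivity)]
  rcases hab with hbM | ha₂
  · have hbM' : (b 0 : ℝ) ≤ M := Nat.cast_le.mpr hbM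
    have hb_ge : 1 / (M + 1 : ℝ) ≤ cfValue b := by
      have hb_pos : (0 : ℝ) < b 0 := Nat.cast_pos.mpr (hb 0)
      rw [cfValue_eq_one_div hb]
      exact one_div_le_one_div_of_le (by linarith [htail_b.1]) (by linarith [htail_b.2])
    rw [div_le_iff₀ (by positivity)] at hb_ge
    nlinarith
  · have ha₂' : (2 : ℝ) ≤ a 0 := Nat.ofNat_le_cast.mpr ha₂
    have ha_le : cfValue a ≤ 1 / 2 := by
      rw [cfValue_eq_one_div ha]
      exact one_div_le_one_div_of_le two_pos (by linarith [htail_a.1])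
    nlinarith

lemma le_abs_cfValue_sub {M p : ℕ} (ha : ∀ k, 1 ≤ a k) (hb : ∀ k, 1 ≤ b k) (hM : 1 ≤ M)
    (hab : ∀ k < p, a k = b k) (hlt : a p < b p) (hnext : b (p + 1) ≤ M ∨ 2 ≤ a (p + 1)) :
    ((b p : ℝ) - a p) / (4 * (M + 1) * (continuant a p : ℝ) ^ 2 * ((a p + 1) * (b p + 1)))
      ≤ |cfValue a - cfValue b| := by
  set x := cfValue fun k => a (p + 1 + k)
  set y := cfValue fun k => b (p + 1 + k)
  have hx : x ∈ Ioo 0 1 := cfValue_mem_Ioo fun _ => ha _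
  have hy : y ∈ Ioo 0 1 := cfValue_mem_Ioo fun _ => hb _
  have ha_pos : (0 : ℝ) < a p := Nat.cast_pos.mpr (ha p)
  have hb_pos : (0 : ℝ) < b p := Nat.cast_pos.mpr (hb p)
  have hq := continuant_pos ha p
  have hlt' : (a p : ℝ) < b p := Nat.cast_lt.mpr hlt
  have hgap : ((b p : ℝ) - a p) / (M + 1) ≤ (b p + y) - (a p + x) :=
    div_le_add_cfValue_sub (fun _ => ha _) (fun _ => hb _) hM hlt hnext
  have hgap_nonneg : (0 : ℝ) ≤ ((b p : ℝ) - a p) / (M + 1) :=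
    div_nonneg (sub_nonneg.mpr hlt'.le) (by positivity)
  have hxpos : 0 < a p + x := add_pos ha_pos hx.1
  have hypos : 0 < b p + y := add_pos hb_pos hy.1
  have htails : |1 / (a p + x) - 1 / (b p + y)|
      = ((b p + y) - (a p + x)) / ((a p + x) * (b p + y)) := by
    rw [div_sub_div _ _ hxpos.ne' hypos.ne', one_mul, mul_one, abs_of_nonneg]
    exact div_nonneg (hgap_nonneg.trans hgap) (mul_pos hxpos hypos).le
  rw [cfValue_eq_cfMap_one_div ha p, cfValue_eq_cfMap_one_div hb p,
    ← cfMap_congr p hab]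
  refine le_trans ?_ (le_abs_cfMap_sub ha p (one_div_add_mem_Icc (ha p) hx.1.le)
    (one_div_add_mem_Icc (hb p) hy.1.le))
  calc ((b p : ℝ) - a p) / (4 * (M + 1) * (continuant a p : ℝ) ^ 2 * ((a p + 1) * (b p + 1)))
      = ((b p : ℝ) - a p) / (M + 1) / ((a p + 1) * (b p + 1)) / (4 * (continuant a p : ℝ) ^ 2) := by
        rw [div_div, div_div]
        congr 1
        ring
    _ ≤ ((b p + y) - (a p + x)) / ((a p + x) * (b p + y)) / (4 * (continuant a p : ℝ) ^ 2) := by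
        have hgap' := hgap_nonneg.trans hgap
        gcongr
        · exact hx.2.le
        · exact hy.2.le
    _ = _ := by rw [htails]

end CfValue

/-! ### Digits of irrational numbers -/

lemma gaussMap_mem_and_irrational {x : ℝ} (hi : Irrational x) :
    gaussMap x ∈ Ioo (0 : ℝ) 1 ∧ Irrational (gaussMap x) := by
  have hirr : Irrational (gaussMap x) := by
    rw [gaussMap, one_div]
    exact hi.inv.sub_intCast _
  exact ⟨⟨(Int.fract_nonneg (1 / x)).lt_of_ne' hirr.ne_zero, Int.fract_lt_one (1 / x)⟩, hirr⟩

/-- The digits of `x` indexed from `0`, so that `x = [0; digit x 0, digit x 1, …]`. -/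
noncomputable def digit (x : ℝ) (k : ℕ) : ℕ := pq x (k + 1)

section Digit

variable {x : ℝ}

lemma gaussMap_iterate_mem (hx : x ∈ Ioo (0 : ℝ) 1) (hi : Irrational x) (n : ℕ) :
    gaussMap^[n] x ∈ Ioo (0 : ℝ) 1 ∧ Irrational (gaussMap^[n] x) := by
  induction n with
  | zero => exact ⟨hx, hi⟩
  | succ n ih => rw [Function.iterate_succ_apply']; exact gaussMap_mem_and_irrational ih.2

lemma one_le_digit (hx : x ∈ Ioo (0 : ℝ) 1) (hi : Irrational x) (k : ℕ) : 1 ≤ digit x k := by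
  obtain ⟨hpos, hlt⟩ := (gaussMap_iterate_mem hx hi k).1
  exact Nat.le_floor (by simpa using (one_le_inv₀ hpos).mpr hlt.le)

lemma gaussMap_iterate_eq_one_div (hx : x ∈ Ioo (0 : ℝ) 1) (hi : Irrational x) (k : ℕ) :
    gaussMap^[k] x = 1 / (digit x k + gaussMap^[k + 1] x) := by
  have hpos := (gaussMap_iterate_mem hx hi k).1.1
  have hfloor : (digit x k : ℝ) = (⌊1 / gaussMap^[k] x⌋ : ℝ) := by
    rw [digit, pq, Nat.add_sub_cancel, natCast_floor_eq_intCast_floor (by positivity)]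
  rw [Function.iterate_succ_apply', gaussMap, hfloor, add_sub_cancel, one_div_one_div]

lemma eq_cfMap_digit (hx : x ∈ Ioo (0 : ℝ) 1) (hi : Irrational x) (n : ℕ) :
    x = cfMap (digit x) n (gaussMap^[n] x) := by
  induction n with
  | zero => rfl
  | succ n ih => rwa [cfMap, ← gaussMap_iterate_eq_one_div hx hi n]

end Digit

/-! ### Pressure sums and critical exponents -/

/-- A finite word of positive integers, extended by `1` to a sequence of digits. -/
def wordExt {n : ℕ} (u : Fin n → ℕ+) (k : ℕ) : ℕ := if h : k < n then (u ⟨k, h⟩ : ℕ) else 1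

/-- The summand `B₂ ^ ((1 - s) n) (B₁ ^ n q ^ 2) ^ (-s)` of the pressure sums defining `gExp`. -/
noncomputable def pressureTerm (B₁ B₂ s : ℝ) (n : ℕ) (q : ℝ) : ℝ :=
  B₂ ^ ((1 - s) * (n : ℝ)) * (B₁ ^ n * q ^ 2) ^ (-s)

/-- The pressure sum over words of length `n`, whose exponential growth rate defines `gExp`. -/
noncomputable def pressureSum (B₁ B₂ s : ℝ) (n : ℕ) : ENNReal :=
  ∑' u : Fin n → ℕ+, ENNReal.ofReal (pressureTerm B₁ B₂ s n (continuant (wordExt u) n))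

/-- The exponents at which the pressure is nonpositive; `gExp` is the infimum of this set. -/
def nonposPressureSet (B₁ B₂ : ℝ) : Set ℝ :=
  {s : ℝ | 0 ≤ s ∧ atTop.limsup (fun n : ℕ =>
    (((n : ℝ)⁻¹ : ℝ) : EReal) * ENNReal.log (pressureSum B₁ B₂ s n)) ≤ 0}

section WordExt

variable {n : ℕ}

lemma one_le_wordExt (u : Fin n → ℕ+) (k : ℕ) : 1 ≤ wordExt u k := by
  unfold wordExt
  split_ifs
  exacts [(u _).2, le_rfl]

lemma contQ_eq_continuant_wordExt (u : Fin n → ℕ+) :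
    contQ n (fun i => (u i : ℕ)) = continuant (wordExt u) n := by
  rw [← contQ_eq_continuant]
  simp [wordExt]

lemma wordExt_snoc_of_lt (u : Fin n → ℕ+) (k : ℕ+) {j : ℕ} (hj : j < n) :
    wordExt (Fin.snoc (α := fun _ => ℕ+) u k) j = wordExt u j := by
  simp [wordExt, hj, hj.trans n.lt_succ_self, Fin.snoc]

lemma wordExt_snoc_last (u : Fin n → ℕ+) (k : ℕ+) :
    wordExt (Fin.snoc (α := fun _ => ℕ+) u k) n = k := by
  simp [wordExt, Fin.snoc]

lemma continuant_wordExt_snoc (u : Fin n → ℕ+) (k : ℕ+) :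
    continuant (wordExt (Fin.snoc (α := fun _ => ℕ+) u k)) n = continuant (wordExt u) n :=
  continuant_congr n fun _ => wordExt_snoc_of_lt u k

lemma continuant_succ_wordExt_snoc (u : Fin n → ℕ+) (k : ℕ+) :
    continuant (wordExt (Fin.snoc (α := fun _ => ℕ+) u k)) (n + 1)
      = k * continuant (wordExt u) n + prevContinuant (wordExt u) n := by
  rw [continuant_succ, wordExt_snoc_last, continuant_wordExt_snoc]
  congr 1
  cases n with
  | zero => rfl
  | succ n => exact continuant_congr n fun j hj => wordExt_snoc_of_lt u k (hj.trans n.lt_succ_self)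

lemma tsum_pnat_one_div_le (q q' : ℕ) (hq : 1 ≤ q) :
    ∑' k : ℕ+, ENNReal.ofReal (1 / ((k * q + q' : ℝ) * (k * q + q' + q)))
      ≤ ENNReal.ofReal (1 / ((q : ℝ) * (q + q'))) := by
  have : (0 : ℝ) < q := Nat.cast_pos.mpr hq
  set g : ℕ → ℝ := fun k => 1 / (q * ((k + 1) * q + q'))
  have htele : ∀ k : ℕ, 1 / ((((k + 1 : ℕ) : ℝ) * q + q') * (((k + 1 : ℕ) : ℝ) * q + q' + q))
      = g k - g (k + 1) := by
    intro k
    simp only [g]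
    push_cast
    have h₀ : ((k + 1 : ℝ) * q + q') ≠ 0 := by positivity
    have h₁ : ((k + 1 : ℝ) * q + q' + q) ≠ 0 := by positivity
    field_simp
    ring
  rw [tsum_pnat_eq_tsum_succ
    (f := fun k : ℕ => ENNReal.ofReal (1 / ((k * q + q' : ℝ) * (k * q + q' + q))))]
  refine ENNReal.tsum_le_of_sum_range_le fun n => ?_
  rw [← ENNReal.ofReal_sum_of_nonneg fun _ _ => by positivity]
  refine ENNReal.ofReal_le_ofReal ?_
  simp only [htele, Finset.sum_range_sub']
  have hn : 0 ≤ g n := by positivity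
  simpa [g] using hn

/-- The summands are the lengths of the disjoint cylinder intervals of level `n`. -/
lemma tsum_one_div_continuant_mul_le_one (n : ℕ) : ∑' u : Fin n → ℕ+, ENNReal.ofReal
    (1 / ((continuant (wordExt u) n : ℝ)
      * (continuant (wordExt u) n + prevContinuant (wordExt u) n))) ≤ 1 := by
  induction n with
  | zero =>
    rw [tsum_eq_single default fun b hb => absurd (Subsingleton.elim b _) hb]
    simp [continuant, prevContinuant]
  | succ n ih =>
    rw [← Equiv.tsum_eq (Fin.snocEquiv fun _ : Fin (n + 1) => ℕ+),
      ← Equiv.tsum_eq (Equiv.prodComm _ _), ENNReal.tsum_prod']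
    refine (ENNReal.tsum_le_tsum fun u => ?_).trans ih
    refine le_of_eq_of_le (tsum_congr fun k => ?_) (tsum_pnat_one_div_le
      (continuant (wordExt u) n) (prevContinuant (wordExt u) n)
      (one_le_continuant (one_le_wordExt u) n))
    change ENNReal.ofReal (1 / ((continuant (wordExt (Fin.snoc (α := fun _ => ℕ+) u k)) (n + 1) : ℝ)
      * (continuant (wordExt (Fin.snoc (α := fun _ => ℕ+) u k)) (n + 1)
        + continuant (wordExt (Fin.snoc (α := fun _ => ℕ+) u k)) n))) = _
    rw [continuant_succ_wordExt_snoc, continuant_wordExt_snoc]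
    push_cast
    rfl

end WordExt

section Pressure

variable {B₁ B₂ s : ℝ}

lemma gExp_eq_sInf (B₁ B₂ : ℝ) : gExp B₁ B₂ = sInf (nonposPressureSet B₁ B₂) := by
  simp only [gExp, contQ_eq_continuant_wordExt, nonposPressureSet, pressureSum, pressureTerm]

lemma sExp_eq_gExp_one (B : ℝ) : sExp B = gExp B 1 := by
  simp [sExp, gExp]

lemma inv_mul_log_lt_iff {n : ℕ} (hn : 0 < n) (S : ENNReal) (e : ℝ) :
    (((n : ℝ)⁻¹ : ℝ) : EReal) * ENNReal.log S < (e : EReal) ↔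
      S < ENNReal.ofReal (Real.exp (n * e)) := by
  have hn' : (0 : EReal) < ((n : ℝ) : EReal) := EReal.coe_pos.mpr (Nat.cast_pos.mpr hn)
  rw [← ENNReal.log_lt_log_iff, EReal.coe_inv, ← EReal.div_eq_inv_mul,
    EReal.div_lt_iff hn' (EReal.coe_ne_top _), ENNReal.log_ofReal_of_pos (Real.exp_pos _),
    Real.log_exp, ← EReal.coe_mul, mul_comm e]

lemma eventually_pressureSum_lt (h : s ∈ nonposPressureSet B₁ B₂) {e : ℝ} (he : 0 < e) :
    ∀ᶠ n : ℕ in atTop, pressureSum B₁ B₂ s n < ENNReal.ofReal (Real.exp (n * e)) := by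
  have hlim := h.2.trans_lt (EReal.coe_pos.mpr he)
  filter_upwards [eventually_lt_of_limsup_lt hlim, eventually_gt_atTop 0] with n hlt hn
  exact (inv_mul_log_lt_iff hn _ _).mp hlt

lemma frequently_le_pressureSum (hs : 0 ≤ s) (h : s ∉ nonposPressureSet B₁ B₂) :
    ∃ e : ℝ, 0 < e ∧
      ∃ᶠ n : ℕ in atTop, ENNReal.ofReal (Real.exp (n * e)) ≤ pressureSum B₁ B₂ s n := by
  have hlim : 0 < atTop.limsup fun n : ℕ =>
      (((n : ℝ)⁻¹ : ℝ) : EReal) * ENNReal.log (pressureSum B₁ B₂ s n) :=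
    not_le.mp fun hle => h ⟨hs, hle⟩
  obtain ⟨e, he, hlt⟩ := EReal.lt_iff_exists_real_btwn.mp hlim
  have hfreq := frequently_lt_of_lt_limsup (by isBoundedDefault) hlt
  refine ⟨e, EReal.coe_pos.mp he, (hfreq.and_eventually (eventually_gt_atTop 0)).mono ?_⟩
  rintro n ⟨hn, hpos⟩
  rw [← not_lt, ← inv_mul_log_lt_iff hpos, not_lt]
  exact hn.le

lemma mem_nonposPressureSet_of_forall_le (hs : 0 ≤ s) {C : ENNReal} (hC : C ≠ ⊤)
    (h : ∀ n, pressureSum B₁ B₂ s n ≤ C) : s ∈ nonposPressureSet B₁ B₂ := by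
  by_contra hmem
  obtain ⟨e, he, hfreq⟩ := frequently_le_pressureSum hs hmem
  have hexp : Tendsto (fun n : ℕ => ENNReal.ofReal (Real.exp (n * e))) atTop (nhds ⊤) :=
    ENNReal.tendsto_ofReal_nhds_top.mpr (Real.tendsto_exp_atTop.comp
      (tendsto_natCast_atTop_atTop.atTop_mul_const he))
  obtain ⟨n, hle, hlt⟩ := (hfreq.and_eventually (hexp.eventually_const_lt hC.lt_top)).exists
  exact (hle.trans (h n)).not_gt hlt

lemma pressureTerm_one_le {q : ℝ} (hB : 1 ≤ B₁) (B₂ : ℝ) (n : ℕ) (hq : 0 < q) :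
    pressureTerm B₁ B₂ 1 n q ≤ 1 / q ^ 2 := by
  have hBn : 1 ≤ B₁ ^ n := one_le_pow₀ hB
  rw [pressureTerm, sub_self, zero_mul, Real.rpow_zero, one_mul, Real.rpow_neg_one,
    inv_eq_one_div]
  exact one_div_le_one_div_of_le (by positivity) (le_mul_of_one_le_left (by positivity) hBn)

lemma pressureSum_one_le_two (hB : 1 ≤ B₁) (B₂ : ℝ) (n : ℕ) : pressureSum B₁ B₂ 1 n ≤ 2 := by
  have hterm : ∀ u : Fin n → ℕ+,
      ENNReal.ofReal (pressureTerm B₁ B₂ 1 n (continuant (wordExt u) n)) ≤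
        2 * ENNReal.ofReal (1 / ((continuant (wordExt u) n : ℝ)
          * (continuant (wordExt u) n + prevContinuant (wordExt u) n))) := by
    intro u
    have hq := continuant_pos (one_le_wordExt u) n
    have hq' : (prevContinuant (wordExt u) n : ℝ) ≤ continuant (wordExt u) n :=
      Nat.cast_le.mpr (prevContinuant_le_continuant (one_le_wordExt u) n)
    rw [← ENNReal.ofReal_ofNat 2, ← ENNReal.ofReal_mul zero_le_two]
    refine ENNReal.ofReal_le_ofReal ((pressureTerm_one_le hB B₂ n hq).trans ?_)
    rw [mul_one_div, div_le_div_iff₀ (by positivity) (by positivity)]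
    nlinarith
  calc pressureSum B₁ B₂ 1 n ≤ _ := ENNReal.tsum_le_tsum hterm
    _ ≤ 2 * 1 := by
        rw [ENNReal.tsum_mul_left]
        gcongr
        exact tsum_one_div_continuant_mul_le_one n
    _ = 2 := mul_one 2

lemma one_mem_nonposPressureSet (hB : 1 ≤ B₁) (B₂ : ℝ) : (1 : ℝ) ∈ nonposPressureSet B₁ B₂ :=
  mem_nonposPressureSet_of_forall_le zero_le_one ENNReal.ofNat_ne_top (pressureSum_one_le_two hB B₂)

lemma bddBelow_nonposPressureSet (B₁ B₂ : ℝ) : BddBelow (nonposPressureSet B₁ B₂) :=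
  ⟨0, fun _ h => h.1⟩

lemma gExp_le_one (hB : 1 ≤ B₁) (B₂ : ℝ) : gExp B₁ B₂ ≤ 1 := by
  rw [gExp_eq_sInf]
  exact csInf_le (bddBelow_nonposPressureSet B₁ B₂) (one_mem_nonposPressureSet hB B₂)

lemma gExp_nonneg (B₁ B₂ : ℝ) : 0 ≤ gExp B₁ B₂ :=
  Real.sInf_nonneg fun _ h => h.1

lemma notMem_nonposPressureSet_of_lt_gExp (h : s < gExp B₁ B₂) : s ∉ nonposPressureSet B₁ B₂ := by
  rw [gExp_eq_sInf] at h
  exact notMem_of_lt_csInf h (bddBelow_nonposPressureSet B₁ B₂)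

lemma pressureTerm_le_mul {s' q : ℝ} (hB₁ : 1 ≤ B₁) (hB₂ : 1 ≤ B₂) (hs : s' ≤ s) (n : ℕ)
    (hq : 1 ≤ q) :
    pressureTerm B₁ B₂ s n q ≤
      Real.exp (-((s - s') * Real.log B₁ * n)) * pressureTerm B₁ B₂ s' n q := by
  have hBn : 0 < B₁ ^ n := by positivity
  have hle : B₁ ^ n ≤ B₁ ^ n * q ^ 2 := le_mul_of_one_le_right hBn.le (one_le_pow₀ hq)
  have hsplit : (B₁ ^ n * q ^ 2) ^ (-s) =
      (B₁ ^ n * q ^ 2) ^ (-(s - s')) * (B₁ ^ n * q ^ 2) ^ (-s') := by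
    rw [← Real.rpow_add (hBn.trans_le hle)]
    congr 1
    ring
  have hdecay : (B₁ ^ n * q ^ 2) ^ (-(s - s')) ≤ Real.exp (-((s - s') * Real.log B₁ * n)) := by
    refine (Real.rpow_le_rpow_of_nonpos hBn hle (by linarith)).trans_eq ?_
    rw [Real.rpow_def_of_pos hBn, Real.log_pow]
    congr 1
    ring
  have hB₂' : B₂ ^ ((1 - s) * (n : ℝ)) ≤ B₂ ^ ((1 - s') * (n : ℝ)) :=
    Real.rpow_le_rpow_of_exponent_le hB₂ (by gcongr)
  rw [pressureTerm, pressureTerm, hsplit, mul_left_comm]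
  gcongr

lemma pressureSum_le_mul {s' : ℝ} (hB₁ : 1 ≤ B₁) (hB₂ : 1 ≤ B₂) (hs : s' ≤ s) (n : ℕ) :
    pressureSum B₁ B₂ s n ≤
      ENNReal.ofReal (Real.exp (-((s - s') * Real.log B₁ * n))) * pressureSum B₁ B₂ s' n := by
  rw [pressureSum, pressureSum, ← ENNReal.tsum_mul_left]
  refine ENNReal.tsum_le_tsum fun u => ?_
  rw [← ENNReal.ofReal_mul (Real.exp_pos _).le]
  exact ENNReal.ofReal_le_ofReal (pressureTerm_le_mul hB₁ hB₂ hs n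
    (Nat.one_le_cast.mpr (one_le_continuant (one_le_wordExt u) n)))

lemma exists_tsum_pressureSum_ne_top (hB₁ : 1 < B₁) (hB₂ : 1 ≤ B₂) (h : gExp B₁ B₂ < s) :
    ∃ k : ℕ, ∑' n : ℕ, pressureSum B₁ B₂ s (n + k) ≠ ⊤ := by
  rw [gExp_eq_sInf] at h
  obtain ⟨s', hs', hlt⟩ := exists_lt_of_csInf_lt ⟨1, one_mem_nonposPressureSet hB₁.le B₂⟩ h
  set e := (s - s') * Real.log B₁ / 2 with he
  have he₀ : 0 < e := half_pos (mul_pos (sub_pos.mpr hlt) (Real.log_pos hB₁))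
  obtain ⟨k, hk⟩ := eventually_atTop.mp (eventually_pressureSum_lt hs' he₀)
  have hbound : ∀ n, pressureSum B₁ B₂ s (n + k) ≤ ENNReal.ofReal (Real.exp (-e) ^ n) := by
    intro n
    calc pressureSum B₁ B₂ s (n + k)
        ≤ ENNReal.ofReal (Real.exp (-((s - s') * Real.log B₁ * (n + k : ℕ)))) *
            ENNReal.ofReal (Real.exp ((n + k : ℕ) * e)) :=
          (pressureSum_le_mul hB₁.le hB₂ hlt.le _).trans (by
            gcongr
            exact (hk (n + k) (Nat.le_add_left k n)).le)
      _ = ENNReal.ofReal (Real.exp (-((n + k : ℕ) * e))) := by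
          rw [← ENNReal.ofReal_mul (Real.exp_pos _).le, ← Real.exp_add, he]
          congr 2
          ring
      _ ≤ ENNReal.ofReal (Real.exp (-e) ^ n) := by
          rw [← Real.exp_nat_mul]
          refine ENNReal.ofReal_le_ofReal (Real.exp_le_exp.mpr ?_)
          have hke : 0 ≤ k * e := by positivity
          push_cast
          linarith
  refine ⟨k, ne_top_of_le_ne_top ?_ (ENNReal.tsum_le_tsum hbound)⟩
  exact (summable_geometric_of_lt_one (Real.exp_pos _).le
    (Real.exp_lt_one_iff.mpr (neg_lt_zero.mpr he₀))).tsum_ofReal_ne_top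

end Pressure

/-! ### Hausdorff measure and limsup sets -/

lemma le_ofReal_of_forall_gt {a : ENNReal} {d : ℝ} (h : ∀ s, d < s → a ≤ ENNReal.ofReal s) :
    a ≤ ENNReal.ofReal d :=
  ge_of_tendsto ((ENNReal.continuous_ofReal.tendsto d).mono_left nhdsWithin_le_nhds)
    (eventually_nhdsWithin_of_forall (s := Ioi d) h)

lemma ofReal_le_of_forall_lt {a : ENNReal} {d : ℝ}
    (h : ∀ s, 0 < s → s < d → ENNReal.ofReal s ≤ a) : ENNReal.ofReal d ≤ a := by
  refine le_of_tendsto ((ENNReal.continuous_ofReal.tendsto d).mono_left nhdsWithin_le_nhds)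
    (eventually_nhdsWithin_of_forall (s := Iio d) fun s hs => ?_)
  rcases le_or_gt s 0 with hs₀ | hs₀
  · simp [ENNReal.ofReal_of_nonpos hs₀]
  · exact h s hs₀ hs

/-- The Hausdorff–Cantelli lemma. -/
lemma hausdorffMeasure_eq_zero_of_frequently_mem {X : Type*} [EMetricSpace X] [MeasurableSpace X]
    [BorelSpace X] {s : ℝ} (hs : 0 < s) {ι : ℕ → Type*} [∀ n, Countable (ι n)]
    (t : ∀ n, ι n → Set X) (hsum : ∑' n, ∑' i, Metric.ediam (t n i) ^ s ≠ ⊤) {S : Set X}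
    (hS : ∀ x ∈ S, ∃ᶠ n in atTop, x ∈ ⋃ i, t n i) : μH[s] S = 0 := by
  set tail : ℕ → ENNReal := fun k => ∑' n, ∑' i, Metric.ediam (t (n + k) i) ^ s
  have htail : Tendsto tail atTop (nhds 0) :=
    ENNReal.tendsto_sum_nat_add (fun n => ∑' i, Metric.ediam (t n i) ^ s) hsum
  have hradius : Tendsto (fun k => tail k ^ s⁻¹) atTop (nhds 0) := by
    have h := htail.ennrpow_const s⁻¹
    rwa [ENNReal.zero_rpow_of_pos (inv_pos.mpr hs)] at h
  have hdiam : ∀ k (q : Σ n, ι (n + k)), Metric.ediam (t (q.1 + k) q.2) ≤ tail k ^ s⁻¹ := by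
    rintro k ⟨n, i⟩
    rw [ENNReal.le_rpow_inv_iff hs]
    exact (ENNReal.le_tsum (f := fun i => Metric.ediam (t (n + k) i) ^ s) i).trans
      (ENNReal.le_tsum (f := fun n => ∑' i, Metric.ediam (t (n + k) i) ^ s) n)
  have hcover : ∀ k, S ⊆ ⋃ q : Σ n, ι (n + k), t (q.1 + k) q.2 := by
    intro k x hx
    obtain ⟨n, hkn, hxn⟩ := frequently_atTop.mp (hS x hx) k
    obtain ⟨n, rfl⟩ := Nat.exists_eq_add_of_le' hkn
    obtain ⟨i, hi⟩ := mem_iUnion.mp hxn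
    exact mem_iUnion.mpr ⟨⟨n, i⟩, hi⟩
  refine le_antisymm ((Measure.hausdorffMeasure_le_liminf_tsum s S _ hradius
    (fun k (q : Σ n, ι (n + k)) => t (q.1 + k) q.2)
    (Eventually.of_forall hdiam) (Eventually.of_forall hcover)).trans ?_) zero_le
  simp only [ENNReal.tsum_sigma']
  exact htail.liminf_eq.le

/-! ### The limsup set and its natural covers -/

/-- The set `S_m` of the theorem. -/
def largeDigitSet (m : ℕ) (A c : ℕ → ℝ) : Set ℝ :=
  {x : ℝ | x ∈ Set.Ioo (0 : ℝ) 1 ∧ Irrational x ∧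
    {n : ℕ | ∀ i < m, c i * A i ^ n ≤ (pq x (n + i) : ℝ) ∧
      (pq x (n + i) : ℝ) < 2 * (c i * A i ^ n)}.Infinite}

/-- `partialProd A i = A_0 ⋯ A_{i-1}`, which is `β_{i-1}` in the notation of the theorem. -/
noncomputable def partialProd (A : ℕ → ℝ) (i : ℕ) : ℝ := ∏ j ∈ Finset.range i, A j

/-- The lower threshold `c_j A_j ^ n` for the digit `a_{n+j}`. -/
noncomputable def digitScale (A c : ℕ → ℝ) (n j : ℕ) : ℝ := c j * A j ^ n

/-- The product of the first `i` thresholds, about the number of admissible blocks of `i` digits. -/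
noncomputable def scaleProd (A c : ℕ → ℝ) (n i : ℕ) : ℝ :=
  ∏ j ∈ Finset.range i, digitScale A c n j

/-- The integers in `[X, 2 * X)`. -/
noncomputable def doubleIco (X : ℝ) : Finset ℕ := Finset.Ico ⌈X⌉₊ ⌈2 * X⌉₊

section DoubleIco

variable {X : ℝ}

lemma mem_doubleIco {k : ℕ} : k ∈ doubleIco X ↔ X ≤ k ∧ (k : ℝ) < 2 * X := by
  rw [doubleIco, Finset.mem_Ico, Nat.ceil_le, Nat.lt_ceil]

lemma card_doubleIco (hX : 0 ≤ X) : ((doubleIco X).card : ℝ) = ⌈2 * X⌉₊ - ⌈X⌉₊ := by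
  rw [doubleIco, Nat.card_Ico, Nat.cast_sub (Nat.ceil_mono (by linarith))]

lemma card_doubleIco_le (hX : 0 ≤ X) : ((doubleIco X).card : ℝ) ≤ X + 1 := by
  rw [card_doubleIco hX]
  linarith [Nat.ceil_lt_add_one (mul_nonneg zero_le_two hX), Nat.le_ceil X]

lemma half_le_card_doubleIco (hX : 2 ≤ X) : X / 2 ≤ (doubleIco X).card := by
  have hX₀ : 0 ≤ X := zero_le_two.trans hX
  rw [card_doubleIco hX₀]
  linarith [Nat.ceil_lt_add_one hX₀, Nat.le_ceil (2 * X)]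

end DoubleIco

section Scale

variable {m : ℕ} {A c : ℕ → ℝ}

lemma partialProd_succ (A : ℕ → ℝ) (i : ℕ) : partialProd A (i + 1) = partialProd A i * A i :=
  Finset.prod_range_succ _ _

lemma dimNum_eq_gExp (A : ℕ → ℝ) (i : ℕ) :
    dimNum A i = gExp (partialProd A (i + 1)) (partialProd A i) := by
  cases i with
  | zero => simp [dimNum, sExp_eq_gExp_one, partialProd, betaProd]
  | succ i => rfl

lemma one_le_partialProd (hA : ∀ i < m, 1 < A i) {i : ℕ} (hi : i ≤ m) : 1 ≤ partialProd A i :=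
  Finset.prod_const_one.ge.trans (Finset.prod_le_prod (fun _ _ => zero_le_one) fun j hj =>
    (hA j ((Finset.mem_range.mp hj).trans_le hi)).le)

lemma one_lt_partialProd_succ (hA : ∀ i < m, 1 < A i) {i : ℕ} (hi : i < m) :
    1 < partialProd A (i + 1) := by
  rw [partialProd_succ]
  exact one_lt_mul_of_le_of_lt (one_le_partialProd hA hi.le) (hA i hi)

lemma digitScale_pos (hA : ∀ i < m, 1 < A i) (hc : ∀ i < m, 0 < c i) (n : ℕ) {j : ℕ}
    (hj : j < m) : 0 < digitScale A c n j :=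
  mul_pos (hc j hj) (pow_pos (zero_lt_one.trans (hA j hj)) n)

lemma digitScale_mono (hA : ∀ i < m, 1 < A i) (hc : ∀ i < m, 0 < c i) {n n' : ℕ} (hn : n ≤ n')
    {j : ℕ} (hj : j < m) : digitScale A c n j ≤ digitScale A c n' j :=
  mul_le_mul_of_nonneg_left (pow_le_pow_right₀ (hA j hj).le hn) (hc j hj).le

lemma scaleProd_succ (A c : ℕ → ℝ) (n i : ℕ) :
    scaleProd A c n (i + 1) = scaleProd A c n i * digitScale A c n i :=
  Finset.prod_range_succ _ _

lemma scaleProd_pos (hA : ∀ i < m, 1 < A i) (hc : ∀ i < m, 0 < c i) (n : ℕ) {i : ℕ}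
    (hi : i ≤ m) : 0 < scaleProd A c n i :=
  Finset.prod_pos fun _ hj => digitScale_pos hA hc n ((Finset.mem_range.mp hj).trans_le hi)

lemma scaleProd_add (A c : ℕ → ℝ) (n k i : ℕ) :
    scaleProd A c (n + k) i = scaleProd A c k i * partialProd A i ^ n := by
  rw [scaleProd, scaleProd, partialProd, ← Finset.prod_pow, ← Finset.prod_mul_distrib]
  refine Finset.prod_congr rfl fun j _ => ?_
  rw [digitScale, digitScale, pow_add]
  ring

lemma mem_largeDigitSet_iff {x : ℝ} :
    x ∈ largeDigitSet m A c ↔ x ∈ Ioo (0 : ℝ) 1 ∧ Irrational x ∧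
      ∃ᶠ n in atTop, ∀ j < m, digit x (n + j) ∈ doubleIco (digitScale A c (n + 1) j) := by
  refine and_congr_right fun _ => and_congr_right fun _ => ?_
  rw [← Nat.frequently_atTop_iff_infinite, ← map_add_atTop_eq_nat 1, frequently_map,
    map_add_atTop_eq_nat]
  simp only [mem_doubleIco, digit, digitScale, add_right_comm _ 1]

end Scale

/-- The irrational numbers whose digits start with the word `u` and the block `b`, followed by a
digit which is at least `X`. -/
def blockCylinder {P i : ℕ} (X : ℝ) (u : Fin P → ℕ+) (b : Fin i → ℕ) : Set ℝ :=
  {x : ℝ | x ∈ Ioo (0 : ℝ) 1 ∧ Irrational x ∧ (∀ l < P, digit x l = wordExt u l) ∧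
    (∀ j : Fin i, digit x (P + j) = b j) ∧ X ≤ digit x (P + i)}

/-- The blocks of `i` digits which meet the thresholds at time `n`. -/
noncomputable def admissibleBlocks (A c : ℕ → ℝ) (n i : ℕ) : Finset (Fin i → ℕ) :=
  Fintype.piFinset fun j => doubleIco (digitScale A c n j)

lemma abs_sub_le_of_digit_eq {x y X : ℝ} (hx : x ∈ Ioo (0 : ℝ) 1) (hxi : Irrational x)
    (hy : y ∈ Ioo (0 : ℝ) 1) (hyi : Irrational y) {n : ℕ} (h : ∀ k < n, digit x k = digit y k)
    (hX : 0 < X) (hXx : X ≤ digit x n) (hXy : X ≤ digit y n) :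
    |x - y| ≤ 1 / (X * (continuant (digit x) n : ℝ) ^ 2) := by
  have htail : ∀ z ∈ Ioo (0 : ℝ) 1, Irrational z → X ≤ digit z n →
      gaussMap^[n] z ∈ Icc 0 X⁻¹ := by
    intro z hz hzi hXz
    have hpos := (gaussMap_iterate_mem hz hzi (n + 1)).1.1
    refine ⟨(gaussMap_iterate_mem hz hzi n).1.1.le, ?_⟩
    rw [gaussMap_iterate_eq_one_div hz hzi, one_div]
    exact inv_anti₀ hX (by linarith)
  have htx := htail x hx hxi hXx
  have hty := htail y hy hyi hXy
  calc |x - y|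
      = |cfMap (digit x) n (gaussMap^[n] x) - cfMap (digit x) n (gaussMap^[n] y)| := by
        rw [cfMap_congr n h (gaussMap^[n] y), ← eq_cfMap_digit hx hxi, ← eq_cfMap_digit hy hyi]
    _ ≤ |gaussMap^[n] x - gaussMap^[n] y| / (continuant (digit x) n : ℝ) ^ 2 :=
        abs_cfMap_sub_le (one_le_digit hx hxi) n htx.1 hty.1
    _ ≤ X⁻¹ / (continuant (digit x) n : ℝ) ^ 2 := by
        gcongr
        exact abs_sub_le_iff.mpr ⟨by linarith [htx.2, hty.1], by linarith [htx.1, hty.2]⟩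
    _ = 1 / (X * (continuant (digit x) n : ℝ) ^ 2) := by rw [inv_eq_one_div, div_div]

lemma ediam_blockCylinder_le {P i : ℕ} {X : ℝ} {Y : ℕ → ℝ} (hX : 0 < X) (hY : ∀ j < i, 0 < Y j)
    (u : Fin P → ℕ+) {b : Fin i → ℕ} (hb : ∀ j : Fin i, Y j ≤ b j) :
    Metric.ediam (blockCylinder X u b) ≤ ENNReal.ofReal
      (1 / (X * (continuant (wordExt u) P * ∏ j ∈ Finset.range i, Y j) ^ 2)) := by
  refine Metric.ediam_le fun x ⟨hx, hxi, hxu, hxb, hxX⟩ y ⟨hy, hyi, hyu, hyb, hyX⟩ => ?_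
  have hagree : ∀ k < P + i, digit x k = digit y k := by
    intro k hk
    rcases lt_or_ge k P with hkP | hkP
    · rw [hxu k hkP, hyu k hkP]
    · obtain ⟨j, rfl⟩ := Nat.exists_eq_add_of_le hkP
      exact (hxb ⟨j, by omega⟩).trans (hyb ⟨j, by omega⟩).symm
  have hq : continuant (wordExt u) P * ∏ j ∈ Finset.range i, Y j ≤
      (continuant (digit x) (P + i) : ℝ) := by
    have hprod : ∏ j ∈ Finset.range i, Y j ≤ ∏ j ∈ Finset.range i, (digit x (P + j) : ℝ) := by
      refine Finset.prod_le_prod (fun j hj => (hY j (Finset.mem_range.mp hj)).le) fun j hj => ?_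
      exact (hb ⟨j, Finset.mem_range.mp hj⟩).trans_eq (congrArg _ (hxb ⟨j, _⟩).symm)
    rw [← continuant_congr P hxu]
    refine (mul_le_mul_of_nonneg_left hprod (Nat.cast_nonneg _)).trans ?_
    exact_mod_cast mul_prod_le_continuant_add (digit x) P i
  have hpos : 0 < continuant (wordExt u) P * ∏ j ∈ Finset.range i, Y j :=
    mul_pos (continuant_pos (one_le_wordExt u) P)
      (Finset.prod_pos fun j hj => hY j (Finset.mem_range.mp hj))
  rw [edist_dist, Real.dist_eq]
  refine ENNReal.ofReal_le_ofReal
    ((abs_sub_le_of_digit_eq hx hxi hy hyi hagree hX hxX hyX).trans ?_)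
  gcongr

section Cover

variable {m : ℕ} {A c : ℕ → ℝ}

lemma card_admissibleBlocks_le (hA : ∀ i < m, 1 < A i) (hc : ∀ i < m, 0 < c i) {i : ℕ}
    (hi : i ≤ m) (n : ℕ) :
    ((admissibleBlocks A c n i).card : ℝ) ≤
      (∏ j ∈ Finset.range i, (1 + (digitScale A c 0 j)⁻¹)) * scaleProd A c n i := by
  rw [admissibleBlocks, Fintype.card_piFinset, Nat.cast_prod, scaleProd,
    ← Finset.prod_mul_distrib, Finset.prod_range]
  refine Finset.prod_le_prod (fun _ _ => Nat.cast_nonneg _) fun j _ => ?_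
  have hj : (j : ℕ) < m := j.2.trans_le hi
  have hone : 1 ≤ (digitScale A c 0 j)⁻¹ * digitScale A c n j := by
    rw [← div_eq_inv_mul, one_le_div₀ (digitScale_pos hA hc 0 hj)]
    exact digitScale_mono hA hc (Nat.zero_le n) hj
  refine (card_doubleIco_le (digitScale_pos hA hc n hj).le).trans ?_
  linarith

/-- With `y` about the number of blocks of length `i` and `(y' y q ^ 2)⁻¹` the size of the
corresponding cylinders, this identifies the covering sum with the pressure sum for `gExp`. -/
lemma scaleProd_mul_rpow_eq (hA : ∀ i < m, 1 < A i) (hc : ∀ i < m, 0 < c i) {i : ℕ} (hi : i < m)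
    (s : ℝ) (n k : ℕ) {q : ℝ} (hq : 0 < q) :
    scaleProd A c (n + k) i *
        (1 / (digitScale A c (n + k) i * (q * scaleProd A c (n + k) i) ^ 2)) ^ s =
      scaleProd A c k i ^ (1 - s) * scaleProd A c k (i + 1) ^ (-s) *
        pressureTerm (partialProd A (i + 1)) (partialProd A i) s n q := by
  have hB := zero_lt_one.trans_le (one_le_partialProd hA hi.le)
  have hB' := zero_lt_one.trans (one_lt_partialProd_succ hA hi)
  have hy₀ := scaleProd_pos hA hc k hi.le
  have hy₀' := scaleProd_pos hA hc k (i := i + 1) hi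
  have hy := scaleProd_pos hA hc (n + k) hi.le
  have hy' := scaleProd_pos hA hc (n + k) (i := i + 1) hi
  have hdiam : 1 / (digitScale A c (n + k) i * (q * scaleProd A c (n + k) i) ^ 2) =
      (scaleProd A c (n + k) i * (scaleProd A c (n + k) (i + 1) * q ^ 2))⁻¹ := by
    rw [scaleProd_succ, one_div]
    congr 1
    ring
  have hsplit : scaleProd A c (n + k) i * scaleProd A c (n + k) i ^ (-s) =
      scaleProd A c (n + k) i ^ (1 - s) := by
    rw [sub_eq_add_neg, Real.rpow_add hy, Real.rpow_one]
  rw [hdiam, Real.inv_rpow (by positivity), ← Real.rpow_neg (by positivity),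
    Real.mul_rpow hy.le (by positivity), ← mul_assoc, hsplit, scaleProd_add, scaleProd_add,
    Real.mul_rpow hy₀.le (by positivity), mul_assoc (scaleProd A c k (i + 1)),
    Real.mul_rpow hy₀'.le (by positivity), ← Real.rpow_natCast, ← Real.rpow_mul hB.le,
    mul_comm (n : ℝ), pressureTerm]
  ring

lemma tsum_ediam_blockCylinder_le (hA : ∀ i < m, 1 < A i) (hc : ∀ i < m, 0 < c i) {i : ℕ}
    (hi : i < m) {s : ℝ} (hs : 0 ≤ s) (k : ℕ) :
    ∃ C : ℝ, ∀ n, ∑' q : (Fin n → ℕ+) × admissibleBlocks A c (n + k) i,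
        Metric.ediam (blockCylinder (digitScale A c (n + k) i) q.1 q.2.1) ^ s ≤
      ENNReal.ofReal C * pressureSum (partialProd A (i + 1)) (partialProd A i) s n := by
  set G := ∏ j ∈ Finset.range i, (1 + (digitScale A c 0 j)⁻¹)
  have hG : 0 ≤ G := Finset.prod_nonneg fun j hj => by
    have hpos := digitScale_pos hA hc 0 ((Finset.mem_range.mp hj).trans hi)
    positivity
  have hy := scaleProd_pos hA hc k hi.le
  have hy' := scaleProd_pos hA hc k (i := i + 1) hi
  set C := G * (scaleProd A c k i ^ (1 - s) * scaleProd A c k (i + 1) ^ (-s))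
  have hC : 0 ≤ C := by positivity
  refine ⟨C, fun n => ?_⟩
  rw [ENNReal.tsum_prod', pressureSum, ← ENNReal.tsum_mul_left]
  refine ENNReal.tsum_le_tsum fun u => ?_
  have hq := continuant_pos (one_le_wordExt u) n
  set δ := 1 / (digitScale A c (n + k) i *
    (continuant (wordExt u) n * scaleProd A c (n + k) i) ^ 2)
  have hX := digitScale_pos hA hc (n + k) hi
  have hδ : 0 ≤ δ := by positivity
  have hdiam : ∀ b : admissibleBlocks A c (n + k) i,
      Metric.ediam (blockCylinder (digitScale A c (n + k) i) u b.1) ^ s ≤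
        ENNReal.ofReal (δ ^ s) := by
    intro b
    rw [← ENNReal.ofReal_rpow_of_nonneg hδ hs]
    refine ENNReal.rpow_le_rpow (ediam_blockCylinder_le hX
      (fun j hj => digitScale_pos hA hc (n + k) (hj.trans hi)) u fun j => ?_) hs
    exact (mem_doubleIco.mp (Fintype.mem_piFinset.mp b.2 j)).1
  calc ∑' b : admissibleBlocks A c (n + k) i,
        Metric.ediam (blockCylinder (digitScale A c (n + k) i) u b.1) ^ s
      ≤ ∑' _ : admissibleBlocks A c (n + k) i, ENNReal.ofReal (δ ^ s) :=
        ENNReal.tsum_le_tsum hdiam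
    _ = ENNReal.ofReal ((admissibleBlocks A c (n + k) i).card * δ ^ s) := by
        rw [tsum_fintype, Finset.sum_const, Finset.card_univ, Fintype.card_coe, nsmul_eq_mul,
          ENNReal.ofReal_mul (Nat.cast_nonneg _), ENNReal.ofReal_natCast]
    _ ≤ ENNReal.ofReal (G * scaleProd A c (n + k) i * δ ^ s) := by
        gcongr
        exact card_admissibleBlocks_le hA hc hi.le (n + k)
    _ = _ := by
        rw [← ENNReal.ofReal_mul hC, mul_assoc, scaleProd_mul_rpow_eq hA hc hi s n k hq,
          ← mul_assoc]

lemma frequently_mem_blockCylinder {x : ℝ} (hx : x ∈ largeDigitSet m A c) {i : ℕ} (hi : i < m) :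
    ∃ᶠ n in atTop, x ∈ ⋃ q : (Fin n → ℕ+) × admissibleBlocks A c (n + 1) i,
      blockCylinder (digitScale A c (n + 1) i) q.1 q.2.1 := by
  obtain ⟨hx, hxi, hfreq⟩ := mem_largeDigitSet_iff.mp hx
  refine hfreq.mono fun n hn => mem_iUnion.mpr ⟨⟨fun l => ⟨digit x l, one_le_digit hx hxi l⟩,
    fun j => digit x (n + j), ?_⟩, hx, hxi, fun l hl => ?_, fun _ => rfl, ?_⟩
  · exact Fintype.mem_piFinset.mpr fun j => hn j (j.2.trans hi)
  · simp [wordExt, hl]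
  · exact (mem_doubleIco.mp (hn i hi)).1

lemma dimH_largeDigitSet_le_dimNum (hA : ∀ i < m, 1 < A i) (hc : ∀ i < m, 0 < c i) {i : ℕ}
    (hi : i < m) : dimH (largeDigitSet m A c) ≤ ENNReal.ofReal (dimNum A i) := by
  refine le_ofReal_of_forall_gt fun s hs => ?_
  rw [dimNum_eq_gExp] at hs
  have hs₀ : 0 < s := (gExp_nonneg _ _).trans_lt hs
  obtain ⟨k, hk⟩ := exists_tsum_pressureSum_ne_top (one_lt_partialProd_succ hA hi)
    (one_le_partialProd hA hi.le) hs
  obtain ⟨C, hC⟩ := tsum_ediam_blockCylinder_le hA hc hi hs₀.le 1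
  have hzero : μH[s] (largeDigitSet m A c) = 0 := by
    refine hausdorffMeasure_eq_zero_of_frequently_mem hs₀
      (ι := fun n => (Fin (n + k) → ℕ+) × admissibleBlocks A c (n + k + 1) i)
      (fun n q => blockCylinder (digitScale A c (n + k + 1) i) q.1 q.2.1)
      (ne_top_of_le_ne_top ?_ (ENNReal.tsum_le_tsum fun n => hC (n + k))) fun x hx => ?_
    · rw [ENNReal.tsum_mul_left]
      exact ENNReal.mul_ne_top ENNReal.ofReal_ne_top hk
    · have hfreq := frequently_mem_blockCylinder hx hi
      rwa [← map_add_atTop_eq_nat k, frequently_map] at hfreq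
  exact dimH_le_of_hausdorffMeasure_ne_top (d := ⟨s, hs₀.le⟩) (hzero.trans_ne ENNReal.zero_ne_top)
    |>.trans_eq (ENNReal.ofReal_eq_coe_nnreal hs₀.le).symm

end Cover

/-! ### The mass distribution principle for digit sequences -/

lemma hausdorffMeasure_ne_zero_of_measure_le {X : Type*} [EMetricSpace X] [MeasurableSpace X]
    [BorelSpace X] {ν : Measure X} {s : ℝ} {C : ENNReal} (hC : C ≠ ⊤)
    (hν : ∀ U, IsClosed U → ν U ≤ C * Metric.ediam U ^ s) {E : Set X} (hE : ν E ≠ 0) :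
    μH[s] E ≠ 0 := by
  have hle : ν ≤ Measure.mkMetric fun r => (C + 1) * r ^ s := by
    refine Measure.le_mkMetric _ ν 1 one_pos fun U _ => (measure_mono subset_closure).trans ?_
    rw [← Metric.ediam_closure]
    exact (hν _ isClosed_closure).trans (mul_le_mul_left le_self_add _)
  have hsmul : ν ≤ (C + 1) • μH[s] := hle.trans
    (Measure.mkMetric_mono_smul (by finiteness) (by simp) (Eventually.of_forall fun _ => le_rfl))
  exact fun h => hE (by simpa [h] using hsmul E)

/-- The sequences which agree with `b` before time `p` and whose digit at `p` is in `[b p, h]`. -/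
def digitSlab (b : ℕ → ℕ) (p h : ℕ) : Set (ℕ → ℕ) := {a | (∀ k < p, a k = b k) ∧ a p ∈ Icc (b p) h}

/-- The order of magnitude of the distance between a continued fraction with digits `b` and one
which first differs from it at time `p`, where it has the digit `h`. -/
noncomputable def digitGap (b : ℕ → ℕ) (p h : ℕ) : ℝ :=
  ((h : ℝ) - b p) / ((continuant b p : ℝ) ^ 2 * ((b p + 1) * (h + 1)))

lemma exists_subset_digitSlab {S : Set (ℕ → ℕ)} (hS : S.Nontrivial)
    (hbdd : ∀ k, BddAbove ((fun a => a k) '' S)) :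
    ∃ p, ∃ a ∈ S, ∃ b ∈ S, a p < b p ∧ S ⊆ digitSlab a p (b p) := by
  classical
  have hex : ∃ p, ∃ a ∈ S, ∃ b ∈ S, a p ≠ b p := by
    obtain ⟨a, ha, b, hb, hab⟩ := hS
    obtain ⟨p, hp⟩ := Function.ne_iff.mp hab
    exact ⟨p, a, ha, b, hb, hp⟩
  obtain ⟨c, hc, d, hd, hcd⟩ := Nat.find_spec hex
  set p := Nat.find hex
  have hagree : ∀ k < p, ∀ a ∈ S, ∀ b ∈ S, a k = b k := by
    intro k hk a ha b hb
    by_contra hne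
    exact Nat.find_min hex hk ⟨a, ha, b, hb, hne⟩
  have hne : ((fun a => a p) '' S).Nonempty := ⟨c p, c, hc, rfl⟩
  obtain ⟨a, ha, hmin⟩ := Nat.sInf_mem hne
  obtain ⟨b, hb, hmax⟩ := Nat.sSup_mem hne (hbdd p)
  have hslab : S ⊆ digitSlab a p (b p) := fun e he => ⟨fun k hk => hagree k hk e he a ha,
    hmin.le.trans (Nat.sInf_le ⟨e, he, rfl⟩), (le_csSup (hbdd p) ⟨e, he, rfl⟩).trans hmax.ge⟩
  have hc' := (hslab hc).2
  have hd' := (hslab hd).2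
  rw [mem_Icc] at hc' hd'
  exact ⟨p, a, ha, b, hb, by omega, hslab⟩

section MassDistribution

variable {Ω : Type*} [MeasurableSpace Ω] {ν : Measure Ω} {a : Ω → ℕ → ℕ} {M : ℕ} {s C : ℝ}

lemma ofReal_digitGap_rpow_le {b b' : ℕ → ℕ} (hb : ∀ k, 1 ≤ b k) (hb' : ∀ k, 1 ≤ b' k)
    (hM : 1 ≤ M) {p : ℕ} (hagree : ∀ k < p, b k = b' k) (hlt : b p < b' p)
    (hnext : b' (p + 1) ≤ M ∨ 2 ≤ b (p + 1)) (hs : 0 ≤ s) (hC : 0 ≤ C) :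
    ENNReal.ofReal (C * digitGap b p (b' p) ^ s) ≤
      ENNReal.ofReal (C * (4 * (M + 1)) ^ s) * edist (cfValue b) (cfValue b') ^ s := by
  have : 0 ≤ digitGap b p (b' p) :=
    div_nonneg (sub_nonneg.mpr (Nat.cast_le.mpr hlt.le)) (by positivity)
  have hgap : digitGap b p (b' p) ≤ 4 * (M + 1) * |cfValue b - cfValue b'| := by
    rw [← div_le_iff₀' (by positivity), digitGap, div_div, mul_comm (_ * _), ← mul_assoc]
    exact le_abs_cfValue_sub hb hb' hM hagree hlt hnext
  rw [edist_dist, Real.dist_eq, ENNReal.ofReal_rpow_of_nonneg (abs_nonneg _) hs,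
    ← ENNReal.ofReal_mul (by positivity), mul_assoc,
    ← Real.mul_rpow (by positivity) (abs_nonneg _)]
  gcongr

lemma measure_preimage_cfValue_le (hpos : ∀ ω k, 1 ≤ a ω k) (hM : 1 ≤ M)
    (hsplit : ∀ k, (∀ ω, a ω k ≤ M) ∨ ∀ ω, 2 ≤ a ω k)
    (hbdd : ∀ k, BddAbove (range fun ω => a ω k)) (hs : 0 ≤ s) (hC : 0 ≤ C)
    (hslab : ∀ ω ω' p, (∀ k < p, a ω k = a ω' k) → a ω p < a ω' p →
      ν (a ⁻¹' digitSlab (a ω) p (a ω' p)) ≤ ENNReal.ofReal (C * digitGap (a ω) p (a ω' p) ^ s))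
    (hatom : ∀ ω, ν (a ⁻¹' {a ω}) = 0) (U : Set ℝ) :
    ν ((fun ω => cfValue (a ω)) ⁻¹' U) ≤
      ENNReal.ofReal (C * (4 * (M + 1)) ^ s) * Metric.ediam U ^ s := by
  set V := (fun ω => cfValue (a ω)) ⁻¹' U
  rcases (a '' V).subsingleton_or_nontrivial with hsub | hnontriv
  · rcases V.eq_empty_or_nonempty with hV | ⟨ω, hω⟩
    · simp [hV]
    · have hzero : ν V = 0 := measure_mono_null
        (fun ω' hω' => hsub (mem_image_of_mem a hω') (mem_image_of_mem a hω)) (hatom ω)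
      simp [hzero]
  · have hbddV : ∀ k, BddAbove ((fun b => b k) '' (a '' V)) := fun k => (hbdd k).mono
      (by rintro _ ⟨_, ⟨ω, _, rfl⟩, rfl⟩; exact ⟨ω, rfl⟩)
    obtain ⟨p, _, ⟨ω, hω, rfl⟩, _, ⟨ω', hω', rfl⟩, hlt, hsub⟩ :=
      exists_subset_digitSlab hnontriv hbddV
    have hagree : ∀ k < p, a ω k = a ω' k := fun k hk =>
      ((hsub (mem_image_of_mem a hω')).1 k hk).symm
    calc ν V ≤ ν (a ⁻¹' digitSlab (a ω) p (a ω' p)) := measure_mono (image_subset_iff.mp hsub)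
      _ ≤ ENNReal.ofReal (C * digitGap (a ω) p (a ω' p) ^ s) := hslab ω ω' p hagree hlt
      _ ≤ ENNReal.ofReal (C * (4 * (M + 1)) ^ s) *
            edist (cfValue (a ω)) (cfValue (a ω')) ^ s :=
          ofReal_digitGap_rpow_le (hpos ω) (hpos ω') hM hagree hlt
            ((hsplit (p + 1)).imp (fun h => h ω') fun h => h ω) hs hC
      _ ≤ ENNReal.ofReal (C * (4 * (M + 1)) ^ s) * Metric.ediam U ^ s := by
          gcongr
          exact Metric.edist_le_ediam_of_mem hω hω'

lemma hausdorffMeasure_ne_zero_of_digitSlab_le [NeZero ν] (hmeas : ∀ k, Measurable fun ω => a ω k)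
    (hpos : ∀ ω k, 1 ≤ a ω k) (hM : 1 ≤ M) (hsplit : ∀ k, (∀ ω, a ω k ≤ M) ∨ ∀ ω, 2 ≤ a ω k)
    (hbdd : ∀ k, BddAbove (range fun ω => a ω k)) (hs : 0 ≤ s) (hC : 0 ≤ C)
    (hslab : ∀ ω ω' p, (∀ k < p, a ω k = a ω' k) → a ω p < a ω' p →
      ν (a ⁻¹' digitSlab (a ω) p (a ω' p)) ≤ ENNReal.ofReal (C * digitGap (a ω) p (a ω' p) ^ s))
    (hatom : ∀ ω, ν (a ⁻¹' {a ω}) = 0) {E : Set ℝ} (hE : ∀ ω, cfValue (a ω) ∈ E) :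
    μH[s] E ≠ 0 := by
  have hcf : Measurable fun ω => cfValue (a ω) := measurable_cfValue hmeas hpos
  refine hausdorffMeasure_ne_zero_of_measure_le (ν := ν.map fun ω => cfValue (a ω))
    (C := ENNReal.ofReal (C * (4 * (M + 1)) ^ s)) ENNReal.ofReal_ne_top (fun U hU => ?_) ?_
  · rw [Measure.map_apply hcf hU.measurableSet]
    exact measure_preimage_cfValue_le hpos hM hsplit hbdd hs hC hslab hatom U
  · refine ((Measure.measure_univ_pos.mpr (NeZero.ne ν)).trans_le ?_).ne'
    rw [← eq_univ_of_forall hE]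
    exact Measure.le_map_apply hcf.aemeasurable E

end MassDistribution

/-! ### Scheduling the large digits -/

/-- The factor by which the conditions at level `i` grow per digit: `(B₁ ^ n * q ^ 2) ^ (-s)`
weighted by `B₂ ^ ((1 - s) n)` is `(growthRatio ^ n)⁻¹ * (q ^ 2) ^ (-s)`. -/
noncomputable def growthRatio (A : ℕ → ℝ) (s : ℝ) (i : ℕ) : ℝ :=
  partialProd A (i + 1) ^ s * partialProd A i ^ (s - 1)

/-- The sum of `|I(w)| ^ s` over the words `w` in `W`, up to constants. -/
noncomputable def wordMass {N : ℕ} (s : ℝ) (W : Finset (Fin N → ℕ)) : ℝ :=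
  ∑ w ∈ W, ((contQ N w : ℝ) ^ 2) ^ (-s)

/-- A counter which is multiplied by `z` at each step, and reset to `1` as soon as its current value
satisfies the condition `P`. -/
noncomputable def greedyCounter (P : ℕ → ℝ → Prop) (z : ℝ) : ℕ → ℝ
  | 0 => 1
  | t + 1 => open Classical in if P t (greedyCounter P z t) then 1 else greedyCounter P z t * z

section GreedyCounter

variable {P : ℕ → ℝ → Prop} {z : ℝ}

lemma greedyCounter_succ_of_pos {t : ℕ} (h : P t (greedyCounter P z t)) :
    greedyCounter P z (t + 1) = 1 :=
  if_pos h

lemma greedyCounter_succ_of_neg {t : ℕ} (h : ¬ P t (greedyCounter P z t)) :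
    greedyCounter P z (t + 1) = greedyCounter P z t * z :=
  if_neg h

lemma one_le_greedyCounter (hz : 1 ≤ z) (t : ℕ) : 1 ≤ greedyCounter P z t := by
  induction t with
  | zero => exact le_rfl
  | succ t ih =>
    by_cases h : P t (greedyCounter P z t)
    · rw [greedyCounter_succ_of_pos h]
    · rw [greedyCounter_succ_of_neg h]
      exact one_le_mul_of_one_le_of_one_le ih hz

lemma frequently_greedyCounter (hz : 1 ≤ z) (hP : ∀ t, Monotone (P t))
    (hex : ∀ n, ∃ j, P (n + j) (z ^ j)) : ∃ᶠ t in atTop, P t (greedyCounter P z t) := by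
  refine frequently_atTop.mpr fun n => ?_
  by_contra! hne
  have hgrow : ∀ j, z ^ j ≤ greedyCounter P z (n + j) := by
    intro j
    induction j with
    | zero => exact one_le_greedyCounter hz n
    | succ j ih =>
      rw [← add_assoc, greedyCounter_succ_of_neg (hne (n + j) (Nat.le_add_right n j)), pow_succ]
      gcongr
  obtain ⟨j, hj⟩ := hex n
  exact hne (n + j) (Nat.le_add_right n j) (hP (n + j) (hgrow j) hj)

end GreedyCounter

lemma pressureTerm_eq {B₁ B₂ : ℝ} (hB₁ : 0 < B₁) (hB₂ : 0 < B₂) (s : ℝ) (n : ℕ) (q : ℝ) :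
    pressureTerm B₁ B₂ s n q = ((B₁ ^ s * B₂ ^ (s - 1)) ^ n)⁻¹ * (q ^ 2) ^ (-s) := by
  have hB₁n : (B₁ ^ n) ^ (-s) = ((B₁ ^ s) ^ n)⁻¹ := by
    rw [Real.rpow_neg (by positivity), ← Real.rpow_pow_comm hB₁.le]
  have hB₂n : B₂ ^ ((1 - s) * n) = ((B₂ ^ (s - 1)) ^ n)⁻¹ := by
    rw [Real.rpow_mul_natCast hB₂.le, ← neg_sub s 1, Real.rpow_neg hB₂.le, inv_pow]
  rw [pressureTerm, Real.mul_rpow (by positivity) (by positivity), hB₁n, hB₂n, mul_pow, mul_inv]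
  ring

lemma exists_mul_pow_lt_wordMass {B₁ B₂ s : ℝ} (hB₁ : 0 < B₁) (hB₂ : 0 < B₂) (hs : 0 ≤ s)
    (h : s < gExp B₁ B₂) (K : ℝ) (m : ℕ) :
    ∃ N ≥ m, ∃ W : Finset (Fin N → ℕ), (∀ w ∈ W, ∀ j, 1 ≤ w j) ∧
      K * (B₁ ^ s * B₂ ^ (s - 1)) ^ N < wordMass s W := by
  obtain ⟨e, he, hfreq⟩ := frequently_le_pressureSum hs (notMem_nonposPressureSet_of_lt_gExp h)
  have hexp : ∀ᶠ n : ℕ in atTop, K < Real.exp (n * e) :=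
    (Real.tendsto_exp_atTop.comp
      (tendsto_natCast_atTop_atTop.atTop_mul_const he)).eventually_gt_atTop K
  obtain ⟨N, hle, hK, hN⟩ := (hfreq.and_eventually (hexp.and (eventually_ge_atTop m))).exists
  have hlt : ENNReal.ofReal K < pressureSum B₁ B₂ s N :=
    ((ENNReal.ofReal_lt_ofReal_iff (Real.exp_pos _)).mpr hK).trans_le hle
  rw [pressureSum, ENNReal.tsum_eq_iSup_sum, lt_iSup_iff] at hlt
  obtain ⟨F, hF⟩ := hlt
  have hinj : Function.Injective fun (u : Fin N → ℕ+) (j : Fin N) => (u j : ℕ) :=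
    PNat.coe_injective.comp_left
  refine ⟨N, hN, F.map ⟨_, hinj⟩, fun w hw j => ?_, ?_⟩
  · obtain ⟨u, _, rfl⟩ := Finset.mem_map.mp hw
    exact (u j).2
  · simp only [pressureTerm_eq hB₁ hB₂] at hF
    rw [← ENNReal.ofReal_sum_of_nonneg fun u _ => by positivity, ← Finset.mul_sum] at hF
    rw [wordMass, Finset.sum_map, mul_comm, ← lt_inv_mul_iff₀ (by positivity)]
    simp only [Function.Embedding.coeFn_mk, contQ_eq_continuant_wordExt]
    exact (ENNReal.ofReal_lt_ofReal_iff'.mp hF).1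

section GrowthRatio

variable {m : ℕ} {A c : ℕ → ℝ}

lemma growthRatio_pos (hA : ∀ i < m, 1 < A i) (s : ℝ) {i : ℕ} (hi : i < m) :
    0 < growthRatio A s i :=
  mul_pos (Real.rpow_pos_of_pos (zero_lt_one.trans (one_lt_partialProd_succ hA hi)) s)
    (Real.rpow_pos_of_pos (zero_lt_one.trans_le (one_le_partialProd hA hi.le)) (s - 1))

lemma one_le_growthRatio_zero (hm : 0 < m) (hA : ∀ i < m, 1 < A i) {s : ℝ} (hs : 0 ≤ s) :
    1 ≤ growthRatio A s 0 := by
  simpa [growthRatio, partialProd] using Real.one_le_rpow (hA 0 hm).le hs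

/-- The word length is the same for all `i`, as it is chosen for the largest growth ratio. -/
lemma exists_words (hm : 0 < m) (hA : ∀ i < m, 1 < A i) {s : ℝ} (hs : 0 ≤ s)
    (h : ∀ i < m, s < dimNum A i) (K : ℝ) (hK : 0 ≤ K) :
    ∃ N ≥ m, ∃ W : Finset (Fin N → ℕ), (∀ w ∈ W, ∀ j, 1 ≤ w j) ∧
      ∀ i < m, K * growthRatio A s i ^ N < wordMass s W := by
  obtain ⟨i, hi, hmax⟩ := Finset.exists_max_image (Finset.range m) (growthRatio A s)
    (Finset.nonempty_range_iff.mpr hm.ne')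
  rw [Finset.mem_range] at hi
  obtain ⟨N, hN, W, hW, hlt⟩ := exists_mul_pow_lt_wordMass
    (zero_lt_one.trans (one_lt_partialProd_succ hA hi))
    (zero_lt_one.trans_le (one_le_partialProd hA hi.le)) hs ((h i hi).trans_eq (dimNum_eq_gExp A i))
    K m
  refine ⟨N, hN, W, hW, fun k hk => lt_of_le_of_lt ?_ hlt⟩
  have := (growthRatio_pos hA s hk).le
  gcongr
  exact hmax k (Finset.mem_range.mpr hk)

lemma scaleProd_rpow_mul_rpow (hA : ∀ i < m, 1 < A i) (hc : ∀ i < m, 0 < c i) (s : ℝ) (n k : ℕ)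
    {i : ℕ} (hi : i < m) :
    scaleProd A c (n + k) (i + 1) ^ s * scaleProd A c (n + k) i ^ (s - 1) =
      scaleProd A c k (i + 1) ^ s * scaleProd A c k i ^ (s - 1) * growthRatio A s i ^ n := by
  have hB := one_le_partialProd hA hi.le
  have hB' := one_lt_partialProd_succ hA hi
  rw [scaleProd_add, scaleProd_add, Real.mul_rpow (scaleProd_pos hA hc k hi).le (by positivity),
    Real.mul_rpow (scaleProd_pos hA hc k hi.le).le (by positivity),
    ← Real.rpow_pow_comm (by positivity), ← Real.rpow_pow_comm (by positivity), growthRatio,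
    mul_pow]
  ring

end GrowthRatio

/-! ### The Cantor set of the lower bound -/

/-- Data for a Cantor set of continued fractions whose digits are chosen in blocks of length `N`.
A forced block has its first `m` digits in the windows `[scale t j, 2 * scale t j)`, and ones
afterwards; the other blocks are taken from `freeWords`. The mass gained in the free blocks since
the last forced one is recorded by `slack`, and a forced block is affordable once `slack` dominates
the mass which it loses. -/
structure CantorScheme (m : ℕ) (s : ℝ) where
  N : ℕ
  freeWords : Finset (Fin N → ℕ)
  scale : ℕ → ℕ → ℝ
  IsForced : ℕ → Prop
  slack : ℕ → ℝ
  pos : 0 < m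
  le_N : m ≤ N
  s_pos : 0 < s
  s_le_one : s ≤ 1
  one_le_of_mem : ∀ w ∈ freeWords, ∀ j, 1 ≤ w j
  four_le_wordMass : 4 ≤ wordMass s freeWords
  two_le_scale : ∀ t, IsForced t → ∀ j < m, 2 ≤ scale t j
  slack_zero : slack 0 = 1
  slack_succ_of_forced : ∀ t, IsForced t → slack (t + 1) = 1
  slack_succ_of_free : ∀ t, ¬ IsForced t → slack (t + 1) = slack t * (wordMass s freeWords / 4)
  le_slack : ∀ t, IsForced t → ∀ i < m, 2 ^ m * (3 ^ m * 2 ^ N) ^ 2 *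
    ((∏ j ∈ Finset.range (i + 1), scale t j) ^ s * (∏ j ∈ Finset.range i, scale t j) ^ (s - 1)) ≤
      slack t

namespace CantorScheme

variable {m : ℕ} {s : ℝ} (S : CantorScheme m s)

lemma N_pos : 0 < S.N := S.pos.trans_le S.le_N

lemma one_le_slack (t : ℕ) : 1 ≤ S.slack t := by
  induction t with
  | zero => exact S.slack_zero.ge
  | succ t ih =>
    by_cases h : S.IsForced t
    · exact (S.slack_succ_of_forced t h).ge
    · rw [S.slack_succ_of_free t h]
      exact one_le_mul_of_one_le_of_one_le ih ((one_le_div four_pos).mpr S.four_le_wordMass)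

/-- The digits allowed at position `j` of the block `t` if this block is forced. -/
noncomputable def digitSet (t j : ℕ) : Finset ℕ := if j < m then doubleIco (S.scale t j) else {1}

/-- The words allowed as block `t`. -/
noncomputable def blocks (t : ℕ) : Finset (Fin S.N → ℕ) :=
  open Classical in if S.IsForced t then Fintype.piFinset fun j => S.digitSet t j else S.freeWords

/-- The probability of the word `w` as block `t`: uniform on forced blocks, and proportional to the
power `s` of the length of the cylinder of `w` on free blocks. -/
noncomputable def weight (t : ℕ) (w : Fin S.N → ℕ) : ℝ :=
  open Classical in
  if S.IsForced t then ((S.blocks t).card : ℝ)⁻¹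
  else ((contQ S.N w : ℝ) ^ 2) ^ (-s) / wordMass s S.freeWords

/-- An upper bound for the digits of free blocks. -/
def digitBound : ℕ := S.freeWords.sup (fun w => Finset.univ.sup w) + 1

/-- The product of the first `i` scales of block `t`. -/
noncomputable def blockProd (t i : ℕ) : ℝ := ∏ j ∈ Finset.range i, S.scale t j

section Counting

variable {t i : ℕ}

lemma blocks_of_forced (h : S.IsForced t) :
    S.blocks t = Fintype.piFinset fun j : Fin S.N => S.digitSet t j :=
  if_pos h

lemma blocks_of_free (h : ¬ S.IsForced t) : S.blocks t = S.freeWords := if_neg h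

lemma weight_of_forced (h : S.IsForced t) (w : Fin S.N → ℕ) :
    S.weight t w = ((S.blocks t).card : ℝ)⁻¹ :=
  if_pos h

lemma weight_of_free (h : ¬ S.IsForced t) (w : Fin S.N → ℕ) :
    S.weight t w = ((contQ S.N w : ℝ) ^ 2) ^ (-s) / wordMass s S.freeWords :=
  if_neg h

lemma half_scale_le_card_digitSet (h : S.IsForced t) (hi : i < m) :
    S.scale t i / 2 ≤ (S.digitSet t i).card := by
  rw [digitSet, if_pos hi]
  exact half_le_card_doubleIco (S.two_le_scale t h i hi)

lemma one_le_card_digitSet (h : S.IsForced t) (i : ℕ) : (1 : ℝ) ≤ (S.digitSet t i).card := by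
  by_cases hi : i < m
  · linarith [S.half_scale_le_card_digitSet h hi, S.two_le_scale t h i hi]
  · simp [digitSet, hi]

lemma card_blocks (h : S.IsForced t) :
    (S.blocks t).card = ∏ j ∈ Finset.range S.N, (S.digitSet t j).card := by
  rw [S.blocks_of_forced h, Fintype.card_piFinset,
    Fin.prod_univ_eq_prod_range (fun j => (S.digitSet t j).card)]

lemma card_blocks_pos (h : S.IsForced t) : (0 : ℝ) < (S.blocks t).card := by
  rw [S.card_blocks h, Nat.cast_prod]
  exact Finset.prod_pos fun j _ => zero_lt_one.trans_le (S.one_le_card_digitSet h j)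

lemma blockProd_succ (t i : ℕ) : S.blockProd t (i + 1) = S.blockProd t i * S.scale t i :=
  Finset.prod_range_succ _ _

lemma blockProd_le_succ (h : S.IsForced t) (hi : i < m) (hone : 1 ≤ S.blockProd t i) :
    S.blockProd t i ≤ S.blockProd t (i + 1) := by
  rw [blockProd_succ]
  exact le_mul_of_one_le_right (zero_le_one.trans hone)
    (one_le_two.trans (S.two_le_scale t h i hi))

lemma one_le_blockProd (h : S.IsForced t) (hi : i ≤ m) : 1 ≤ S.blockProd t i := by
  induction i with
  | zero => simp [blockProd]
  | succ i ih =>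
    have hone := ih (Nat.le_of_succ_le hi)
    exact hone.trans (S.blockProd_le_succ h hi hone)

lemma blockProd_div_le_prod_card (h : S.IsForced t) (hi : i ≤ m) :
    S.blockProd t i / 2 ^ i ≤ ∏ j ∈ Finset.range i, ((S.digitSet t j).card : ℝ) := by
  have hlt : ∀ j ∈ Finset.range i, j < m := fun j hj => (Finset.mem_range.mp hj).trans_le hi
  have heq : S.blockProd t i / 2 ^ i = ∏ j ∈ Finset.range i, S.scale t j / 2 := by
    rw [Finset.prod_div_distrib, Finset.prod_const, Finset.card_range, blockProd]
  rw [heq]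
  refine Finset.prod_le_prod (fun j hj => ?_)
    fun j hj => S.half_scale_le_card_digitSet h (hlt j hj)
  linarith [S.two_le_scale t h j (hlt j hj)]

lemma card_mul_blockProd_le (h : S.IsForced t) (hi : i < m) {F : Finset (Fin S.N → ℕ)}
    (hF : F ⊆ S.blocks t) {b : ℕ → ℕ} (hb : ∀ w ∈ F, ∀ j : Fin S.N, (j : ℕ) < i → w j = b j)
    {k l : ℕ} (hkl : ∀ w ∈ F, ∀ j : Fin S.N, (j : ℕ) = i → w j ∈ Icc k l) :
    F.card * (S.blockProd t (i + 1) / 2 ^ (i + 1)) ≤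
      ((l + 1 - k : ℕ) : ℝ) * (S.blocks t).card := by
  set tail : ℕ := ∏ j ∈ Finset.Ico (i + 1) S.N, (S.digitSet t j).card
  have hiN : i + 1 ≤ S.N := hi.trans_le S.le_N
  have hcard : F.card ≤ (l + 1 - k) * tail := by
    set R : ℕ → Finset ℕ := fun j =>
      if j < i then {b j} else if j = i then Finset.Icc k l else S.digitSet t j
    have hsub : F ⊆ Fintype.piFinset fun j : Fin S.N => R j := by
      intro w hw
      have hwB := hF hw
      rw [S.blocks_of_forced h, Fintype.mem_piFinset] at hwB
      refine Fintype.mem_piFinset.mpr fun j => ?_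
      simp only [R]
      split_ifs with hlt heq
      · exact Finset.mem_singleton.mpr (hb w hw j hlt)
      · exact Finset.mem_Icc.mpr (hkl w hw j heq)
      · exact hwB j
    have hhead : ∏ j ∈ Finset.range i, (R j).card = 1 := Finset.prod_eq_one fun j hj => by
      simp [R, Finset.mem_range.mp hj]
    have htail : ∏ j ∈ Finset.Ico (i + 1) S.N, (R j).card = tail :=
      Finset.prod_congr rfl fun j hj => by
        have hij : i < j := (Finset.mem_Ico.mp hj).1
        simp only [R, if_neg hij.not_gt, if_neg hij.ne']
    refine (Finset.card_le_card hsub).trans_eq ?_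
    rw [Fintype.card_piFinset, Fin.prod_univ_eq_prod_range (fun j => (R j).card),
      ← Finset.prod_range_mul_prod_Ico _ hiN, Finset.prod_range_succ, hhead, htail]
    simp [R]
  calc F.card * (S.blockProd t (i + 1) / 2 ^ (i + 1))
      ≤ (((l + 1 - k) * tail : ℕ) : ℝ) *
          ∏ j ∈ Finset.range (i + 1), ((S.digitSet t j).card : ℝ) := by
        have := (zero_le_one.trans (S.one_le_blockProd h (i := i + 1) hi))
        gcongr
        exact S.blockProd_div_le_prod_card h hi
    _ = ((l + 1 - k : ℕ) : ℝ) * (S.blocks t).card := by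
        rw [S.card_blocks h, ← Finset.prod_range_mul_prod_Ico _ hiN]
        push_cast [tail]
        rw [mul_assoc, mul_comm (∏ j ∈ Finset.Ico (i + 1) S.N, _)]

lemma blockProd_le_card_blocks (h : S.IsForced t) :
    S.blockProd t m ≤ 2 ^ m * (S.blocks t).card := by
  rw [← div_le_iff₀' (by positivity), S.card_blocks h, ← Finset.prod_range_mul_prod_Ico _ S.le_N]
  push_cast
  refine (S.blockProd_div_le_prod_card h le_rfl).trans
    (le_mul_of_one_le_right (by positivity) ?_)
  exact_mod_cast Finset.one_le_prod' fun j _ => Nat.one_le_cast.mp (S.one_le_card_digitSet h j)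

end Counting

section PathMeasure

variable {t : ℕ}

lemma wordMass_pos : 0 < wordMass s S.freeWords := four_pos.trans_le S.four_le_wordMass

lemma weight_nonneg (t : ℕ) (w : Fin S.N → ℕ) : 0 ≤ S.weight t w := by
  have := S.wordMass_pos
  by_cases h : S.IsForced t
  · rw [S.weight_of_forced h]; positivity
  · rw [S.weight_of_free h]; positivity

lemma sum_weight (t : ℕ) : ∑ w ∈ S.blocks t, S.weight t w = 1 := by
  by_cases h : S.IsForced t
  · simp_rw [S.weight_of_forced h]
    rw [Finset.sum_const, nsmul_eq_mul, mul_inv_cancel₀ (S.card_blocks_pos h).ne']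
  · simp_rw [S.weight_of_free h]
    rw [← Finset.sum_div, S.blocks_of_free h]
    exact div_self S.wordMass_pos.ne'

/-- The distribution of block `t`. -/
noncomputable def blockPMF (t : ℕ) : PMF (S.blocks t) :=
  PMF.ofFintype (fun w => ENNReal.ofReal (S.weight t w)) (by
    rw [Finset.sum_coe_sort (S.blocks t) fun w => ENNReal.ofReal (S.weight t w),
      ← ENNReal.ofReal_sum_of_nonneg fun w _ => S.weight_nonneg t w, sum_weight,
      ENNReal.ofReal_one])

/-- The sequences of allowed blocks. -/
abbrev Path := ∀ t, S.blocks t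

/-- The law of a sequence of independent blocks. -/
noncomputable def pathMeasure : Measure S.Path :=
  Measure.infinitePi fun t => (S.blockPMF t).toMeasure

instance : IsProbabilityMeasure S.pathMeasure := by
  unfold pathMeasure
  infer_instance

lemma blockPMF_toMeasure_singleton (t : ℕ) (w : S.blocks t) :
    (S.blockPMF t).toMeasure {w} = ENNReal.ofReal (S.weight t w) :=
  PMF.toMeasure_apply_singleton _ _ (MeasurableSet.singleton _)

lemma pathMeasure_cylinder (ω₀ : S.Path) (T : ℕ) (V : Set (S.blocks T)) :
    S.pathMeasure {ω | (∀ t < T, ω t = ω₀ t) ∧ ω T ∈ V} =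
      ENNReal.ofReal (∏ t ∈ Finset.range T, S.weight t (ω₀ t)) * (S.blockPMF T).toMeasure V := by
  set box : ∀ t, Set (S.blocks t) := Function.update (fun t => {ω₀ t}) T V
  have hbox_lt : ∀ t < T, box t = {ω₀ t} := fun t ht => Function.update_of_ne ht.ne _ _
  have hbox_self : box T = V := Function.update_self _ _ _
  have hcyl : {ω : S.Path | (∀ t < T, ω t = ω₀ t) ∧ ω T ∈ V} =
      Set.pi (Finset.range (T + 1)) box := by
    ext ω
    simp only [Set.mem_pi, Set.mem_ofPred_eq, Finset.coe_range, mem_Iio, Nat.forall_lt_succ_right,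
      hbox_self]
    exact and_congr_left fun _ => forall₂_congr fun t ht => by rw [hbox_lt t ht, mem_singleton_iff]
  rw [hcyl, pathMeasure, Measure.infinitePi_pi _ fun _ _ => (Set.toFinite _).measurableSet,
    Finset.prod_range_succ, hbox_self, ENNReal.ofReal_prod_of_nonneg fun t _ => S.weight_nonneg _ _]
  congr 1
  refine Finset.prod_congr rfl fun t ht => ?_
  rw [hbox_lt t (Finset.mem_range.mp ht), blockPMF_toMeasure_singleton]

lemma blockPMF_toMeasure_le_of_forced (h : S.IsForced t) {i : ℕ} (hi : i < m) (b : ℕ → ℕ) {k l : ℕ}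
    (hkl : k < l) :
    (S.blockPMF t).toMeasure {w | (∀ j : Fin S.N, (j : ℕ) < i → w.1 j = b j) ∧
        ∀ j : Fin S.N, (j : ℕ) = i → w.1 j ∈ Icc k l} ≤
      ENNReal.ofReal (2 ^ (i + 2) * (((l : ℝ) - k) / S.blockProd t (i + 1))) := by
  classical
  set V := {w : S.blocks t | (∀ j : Fin S.N, (j : ℕ) < i → w.1 j = b j) ∧
    ∀ j : Fin S.N, (j : ℕ) = i → w.1 j ∈ Icc k l}
  set F : Finset (Fin S.N → ℕ) := V.toFinset.map (Function.Embedding.subtype _)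
  have hmemF : ∀ w ∈ F, ∃ w' ∈ V, w'.1 = w := by simp [F]
  have hcard := S.card_mul_blockProd_le (F := F) h hi
    (fun w hw => by obtain ⟨w', _, rfl⟩ := hmemF w hw; exact w'.2)
    (fun w hw => by obtain ⟨w', hw', rfl⟩ := hmemF w hw; exact hw'.1)
    (fun w hw => by obtain ⟨w', hw', rfl⟩ := hmemF w hw; exact hw'.2)
  have hpmf : ∀ w, S.blockPMF t w = ENNReal.ofReal ((S.blocks t).card : ℝ)⁻¹ := fun w => by
    rw [← S.weight_of_forced h w.1]; rfl
  have hY := S.one_le_blockProd h (i := i + 1) hi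
  have hB := S.card_blocks_pos h
  have hlen : ((l + 1 - k : ℕ) : ℝ) ≤ 2 * ((l : ℝ) - k) := by
    have : (k : ℝ) + 1 ≤ l := mod_cast hkl
    rw [Nat.cast_sub (by omega)]
    push_cast
    linarith
  rw [← Set.coe_toFinset V, PMF.toMeasure_apply_finset]
  simp_rw [hpmf]
  rw [Finset.sum_const, nsmul_eq_mul, ← ENNReal.ofReal_natCast,
    ← ENNReal.ofReal_mul (Nat.cast_nonneg _), ← Finset.card_map (Function.Embedding.subtype _)]
  refine ENNReal.ofReal_le_ofReal ?_
  rw [← div_eq_mul_inv, div_le_iff₀ hB, pow_succ]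
  rw [← le_div_iff₀ (by positivity)] at hcard
  refine hcard.trans ((div_le_div_of_nonneg_right
    (mul_le_mul_of_nonneg_right hlen hB.le) (by positivity)).trans_eq ?_)
  field_simp

end PathMeasure

end CantorScheme

lemma mul_rpow_le_mul {D r s : ℝ} (hD : 1 ≤ D) (hr : 0 ≤ r) (hs : s ≤ 1) :
    (D * r) ^ s ≤ D * r ^ s := by
  rw [Real.mul_rpow (by positivity) hr]
  gcongr
  simpa only [Real.rpow_one] using Real.rpow_le_rpow_of_exponent_le hD hs

lemma rpow_neg_div_mul_le_rpow {q y x k H s : ℝ} (hq : 0 < q) (hy : 0 < y) (hx : 0 < x)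
    (hk : 0 < k) (hkx : k ≤ x) (hs : s ≤ 1) (hH : (y * x) ^ s * y ^ (s - 1) ≤ H) :
    (q ^ 2) ^ (-s) / H * (k / (y * x)) ≤ (k / (x * (q ^ 2 * y ^ 2 * x))) ^ s := by
  have hv : 0 < q ^ 2 * y ^ 2 * x := by positivity
  have hsplit : (q ^ 2 * y ^ 2 * x) ^ s = (q ^ 2) ^ s * ((y * x) ^ s * y ^ (s - 1) * y) := by
    rw [mul_assoc ((y * x) ^ s), ← Real.rpow_add_one hy.ne', sub_add_cancel,
      ← Real.mul_rpow (by positivity) (by positivity),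
      ← Real.mul_rpow (by positivity) (by positivity)]
    ring_nf
  calc (q ^ 2) ^ (-s) / H * (k / (y * x))
      ≤ (q ^ 2) ^ (-s) / ((y * x) ^ s * y ^ (s - 1)) * (k / (y * x)) := by gcongr
    _ = k / x / (q ^ 2 * y ^ 2 * x) ^ s := by
        rw [hsplit, Real.rpow_neg (by positivity)]
        field_simp
    _ ≤ (k / x) ^ s / (q ^ 2 * y ^ 2 * x) ^ s := by
        gcongr
        simpa only [Real.rpow_one] using Real.rpow_le_rpow_of_exponent_ge
          (by positivity : 0 < k / x) ((div_le_one hx).mpr hkx) hs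
    _ = (k / (x * (q ^ 2 * y ^ 2 * x))) ^ s := by
        rw [← Real.div_rpow (by positivity) hv.le, div_div]

namespace CantorScheme

variable {m : ℕ} {s : ℝ} (S : CantorScheme m s)

/-- The digits of the concatenation of the blocks of `ω`. -/
def digits (ω : S.Path) (k : ℕ) : ℕ := (ω (k / S.N)).1 ⟨k % S.N, Nat.mod_lt _ S.N_pos⟩

section Digits

variable {t i : ℕ}

lemma digits_mul_add (ω : S.Path) (t : ℕ) (hi : i < S.N) :
    S.digits ω (t * S.N + i) = (ω t).1 ⟨i, hi⟩ := by
  have hcongr : ∀ u, u = t → ∀ j (hj : j < S.N), j = i → (ω u).1 ⟨j, hj⟩ = (ω t).1 ⟨i, hi⟩ := by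
    rintro u rfl j hj rfl
    rfl
  refine hcongr _ ?_ _ _ ?_
  · rw [mul_comm, Nat.mul_add_div S.N_pos, Nat.div_eq_of_lt hi, add_zero]
  · rw [mul_comm, Nat.mul_add_mod, Nat.mod_eq_of_lt hi]

lemma exists_eq_mul_add (k : ℕ) : ∃ t i, i < S.N ∧ k = t * S.N + i :=
  ⟨k / S.N, k % S.N, Nat.mod_lt _ S.N_pos, (Nat.div_add_mod' k S.N).symm⟩

lemma measurable_digits (k : ℕ) : Measurable fun ω => S.digits ω k :=
  (measurable_pi_apply _).comp (measurable_subtype_coe.comp (measurable_pi_apply _))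

lemma digits_mem_digitSet (h : S.IsForced t) (ω : S.Path) (hi : i < S.N) :
    S.digits ω (t * S.N + i) ∈ S.digitSet t i := by
  have hω : (ω t).1 ∈ Fintype.piFinset fun j : Fin S.N => S.digitSet t j :=
    S.blocks_of_forced h ▸ (ω t).2
  rw [S.digits_mul_add ω t hi]
  exact Fintype.mem_piFinset.mp hω _

lemma digits_mem_doubleIco (h : S.IsForced t) (ω : S.Path) (hi : i < m) :
    S.digits ω (t * S.N + i) ∈ doubleIco (S.scale t i) := by
  have hmem := S.digits_mem_digitSet h ω (hi.trans_le S.le_N)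
  rwa [digitSet, if_pos hi] at hmem

lemma digits_eq_one (h : S.IsForced t) (ω : S.Path) (hmi : m ≤ i) (hi : i < S.N) :
    S.digits ω (t * S.N + i) = 1 := by
  have hmem := S.digits_mem_digitSet h ω hi
  rwa [digitSet, if_neg hmi.not_gt, Finset.mem_singleton] at hmem

lemma two_le_digits (h : S.IsForced t) (ω : S.Path) (hi : i < m) :
    2 ≤ S.digits ω (t * S.N + i) :=
  mod_cast (S.two_le_scale t h i hi).trans (mem_doubleIco.mp (S.digits_mem_doubleIco h ω hi)).1

lemma free_block_mem (h : ¬ S.IsForced t) (ω : S.Path) : (ω t).1 ∈ S.freeWords :=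
  S.blocks_of_free h ▸ (ω t).2

lemma one_le_digitBound : 1 ≤ S.digitBound := Nat.le_add_left _ _

lemma digits_le_digitBound (h : ¬ S.IsForced t) (ω : S.Path) (hi : i < S.N) :
    S.digits ω (t * S.N + i) ≤ S.digitBound := by
  rw [S.digits_mul_add ω t hi]
  refine Nat.le_succ_of_le (le_trans ?_
    (Finset.le_sup (f := fun w => Finset.univ.sup w) (S.free_block_mem h ω)))
  exact Finset.le_sup (f := (ω t).1) (Finset.mem_univ _)

lemma one_le_digits (ω : S.Path) (k : ℕ) : 1 ≤ S.digits ω k := by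
  obtain ⟨t, i, hi, rfl⟩ := S.exists_eq_mul_add k
  by_cases h : S.IsForced t
  · rcases lt_or_ge i m with hmi | hmi
    · exact one_le_two.trans (S.two_le_digits h ω hmi)
    · exact (S.digits_eq_one h ω hmi hi).ge
  · rw [S.digits_mul_add ω t hi]
    exact S.one_le_of_mem _ (S.free_block_mem h ω) _

lemma digits_le_or_two_le (k : ℕ) :
    (∀ ω, S.digits ω k ≤ S.digitBound) ∨ ∀ ω, 2 ≤ S.digits ω k := by
  obtain ⟨t, i, hi, rfl⟩ := S.exists_eq_mul_add k
  by_cases h : S.IsForced t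
  · rcases lt_or_ge i m with hmi | hmi
    · exact Or.inr fun ω => S.two_le_digits h ω hmi
    · exact Or.inl fun ω => (S.digits_eq_one h ω hmi hi).trans_le S.one_le_digitBound
  · exact Or.inl fun ω => S.digits_le_digitBound h ω hi

lemma bddAbove_range_digits (k : ℕ) : BddAbove (range fun ω => S.digits ω k) := by
  obtain ⟨t, i, hi, rfl⟩ := S.exists_eq_mul_add k
  refine ⟨(S.blocks t).sup fun w => w ⟨i, hi⟩, ?_⟩
  rintro _ ⟨ω, rfl⟩
  simp only [S.digits_mul_add ω t hi]
  exact Finset.le_sup (f := fun w : Fin S.N → ℕ => w ⟨i, hi⟩) (ω t).2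

lemma eq_of_digits_eq {ω ω₀ : S.Path} {T : ℕ} (h : ∀ k < T * S.N, S.digits ω k = S.digits ω₀ k) :
    ∀ t < T, ω t = ω₀ t := by
  intro t ht
  ext i
  have hlt : t * S.N + i < T * S.N := by nlinarith [i.2]
  simpa only [S.digits_mul_add _ _ i.2] using h _ hlt

lemma contQ_block (ω : S.Path) (t : ℕ) :
    contQ S.N (ω t).1 = continuant (fun j => S.digits ω (t * S.N + j)) S.N := by
  rw [← contQ_eq_continuant]
  congr 1
  funext i
  exact (S.digits_mul_add ω t i.2).symm

end Digits

section BlockGrowth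

variable {t i : ℕ}

lemma continuant_forced_le (h : S.IsForced t) (ω : S.Path) (hi : i ≤ m) :
    (continuant (S.digits ω) (t * S.N + i) : ℝ) ≤
      continuant (S.digits ω) (t * S.N) * (3 ^ i * S.blockProd t i) := by
  induction i with
  | zero => simp [blockProd]
  | succ i ih =>
    have hlt := (mem_doubleIco.mp (S.digits_mem_doubleIco h ω hi)).2
    have hscale := S.two_le_scale t h i hi
    have hle : (continuant (S.digits ω) (t * S.N + i + 1) : ℝ) ≤
        continuant (S.digits ω) (t * S.N + i) * (S.digits ω (t * S.N + i) + 1) :=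
      mod_cast continuant_succ_le (S.one_le_digits ω) (t * S.N + i)
    calc (continuant (S.digits ω) (t * S.N + i + 1) : ℝ)
        ≤ continuant (S.digits ω) (t * S.N + i) * (3 * S.scale t i) :=
          hle.trans (by gcongr; linarith)
      _ ≤ continuant (S.digits ω) (t * S.N) * (3 ^ i * S.blockProd t i) * (3 * S.scale t i) := by
          gcongr
          exact ih (Nat.le_of_succ_le hi)
      _ = continuant (S.digits ω) (t * S.N) * (3 ^ (i + 1) * S.blockProd t (i + 1)) := by
          rw [blockProd_succ]
          ring

lemma continuant_forced_block_le (h : S.IsForced t) (ω : S.Path) :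
    (continuant (S.digits ω) ((t + 1) * S.N) : ℝ) ≤
      continuant (S.digits ω) (t * S.N) * (3 ^ m * 2 ^ S.N * S.blockProd t m) := by
  have hmN := S.le_N
  have hprod : ∏ j ∈ Finset.range (S.N - m), (S.digits ω (t * S.N + m + j) + 1) =
      2 ^ (S.N - m) := by
    rw [Finset.prod_congr rfl (g := fun _ => 2), Finset.prod_const, Finset.card_range]
    intro j hj
    rw [Finset.mem_range] at hj
    rw [add_assoc, S.digits_eq_one h ω (Nat.le_add_right m j) (by omega)]
  have htail := continuant_add_le_mul_prod (S.one_le_digits ω) (t * S.N + m) (S.N - m)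
  rw [hprod, add_assoc, Nat.add_sub_cancel' hmN, ← add_one_mul] at htail
  have := S.one_le_blockProd h le_rfl
  calc (continuant (S.digits ω) ((t + 1) * S.N) : ℝ)
      ≤ continuant (S.digits ω) (t * S.N + m) * 2 ^ (S.N - m) := mod_cast htail
    _ ≤ continuant (S.digits ω) (t * S.N) * (3 ^ m * S.blockProd t m) * 2 ^ S.N := by
        gcongr
        · exact S.continuant_forced_le h ω le_rfl
        · exact one_le_two
        · exact Nat.sub_le _ _
    _ = continuant (S.digits ω) (t * S.N) * (3 ^ m * 2 ^ S.N * S.blockProd t m) := by ring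

end BlockGrowth

section BlockWeight

variable {t : ℕ}

/-- `le_slack` with `i + 1 = m` pays for the loss of mass of a forced block. -/
lemma rpow_le_slack_mul_card (h : S.IsForced t) :
    ((3 ^ m * 2 ^ S.N * S.blockProd t m) ^ 2) ^ s ≤ S.slack t * (S.blocks t).card := by
  set D : ℝ := 3 ^ m * 2 ^ S.N
  set y := S.blockProd t m
  have hm : m - 1 + 1 = m := Nat.sub_add_cancel S.pos
  have hlt : m - 1 < m := Nat.sub_lt S.pos zero_lt_one
  have hD : 1 ≤ D := one_le_mul_of_one_le_of_one_le (one_le_pow₀ (by norm_num))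
    (one_le_pow₀ one_le_two)
  have hy : 1 ≤ y := S.one_le_blockProd h le_rfl
  have hy' : 1 ≤ S.blockProd t (m - 1) := S.one_le_blockProd h hlt.le
  have hyy' : y ^ (s - 1) ≤ S.blockProd t (m - 1) ^ (s - 1) := by
    refine Real.rpow_le_rpow_of_nonpos (by positivity) ?_ (by linarith [S.s_le_one])
    simpa only [hm] using S.blockProd_le_succ h hlt hy'
  have hslack := S.le_slack t h (m - 1) hlt
  rw [hm] at hslack
  calc ((D * y) ^ 2) ^ s ≤ D ^ 2 * (y ^ 2) ^ s := by
        rw [mul_pow]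
        exact mul_rpow_le_mul (one_le_pow₀ hD) (sq_nonneg y) S.s_le_one
    _ = D ^ 2 * (y ^ s * y ^ (s - 1)) * y := by
        rw [Real.rpow_sub_one (by positivity), sq y, Real.mul_rpow (by positivity) (by positivity)]
        field_simp
    _ ≤ D ^ 2 * (y ^ s * S.blockProd t (m - 1) ^ (s - 1)) * (2 ^ m * (S.blocks t).card) := by
        gcongr
        exact S.blockProd_le_card_blocks h
    _ = 2 ^ m * D ^ 2 * (y ^ s * S.blockProd t (m - 1) ^ (s - 1)) * (S.blocks t).card := by ring
    _ ≤ S.slack t * (S.blocks t).card := by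
        gcongr
        exact hslack

lemma exists_weight_mul_slack_le (ω : S.Path) (t : ℕ) : ∃ r : ℝ, 0 < r ∧
    (continuant (S.digits ω) ((t + 1) * S.N) : ℝ) ≤ continuant (S.digits ω) (t * S.N) * r ∧
    S.weight t (ω t) * S.slack (t + 1) ≤ S.slack t * (r ^ 2) ^ (-s) := by
  by_cases h : S.IsForced t
  · have hy := S.one_le_blockProd h le_rfl
    have hcard := S.card_blocks_pos h
    refine ⟨_, by positivity, S.continuant_forced_block_le h ω, ?_⟩
    rw [S.weight_of_forced h, S.slack_succ_of_forced t h, mul_one, Real.rpow_neg (by positivity),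
      ← div_eq_mul_inv, le_div_iff₀ (by positivity), ← div_eq_inv_mul, div_le_iff₀ hcard]
    exact S.rpow_le_slack_mul_card h
  · set r : ℝ := (contQ S.N (ω t).1 : ℝ) with hrdef
    have hr : 0 < r := by
      rw [hrdef, S.contQ_block]
      exact continuant_pos (fun j => S.one_le_digits ω _) _
    refine ⟨2 * r, by positivity, ?_, ?_⟩
    · have hle := continuant_add_le_two_mul (S.one_le_digits ω) (t * S.N) S.N
      rw [← S.contQ_block, ← add_one_mul] at hle
      rw [mul_left_comm, hrdef]
      exact_mod_cast hle
    · have hmass := S.wordMass_pos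
      have hslack := S.one_le_slack t
      have hle : ((2 * r) ^ 2) ^ s ≤ 4 * (r ^ 2) ^ s := by
        rw [mul_pow]
        norm_num only
        exact mul_rpow_le_mul (by norm_num) (sq_nonneg r) S.s_le_one
      rw [S.weight_of_free h, S.slack_succ_of_free t h, Real.rpow_neg (by positivity),
        Real.rpow_neg (by positivity)]
      calc ((r ^ 2) ^ s)⁻¹ / wordMass s S.freeWords *
            (S.slack t * (wordMass s S.freeWords / 4))
          = S.slack t * (4 * (r ^ 2) ^ s)⁻¹ := by field_simp
        _ ≤ S.slack t * (((2 * r) ^ 2) ^ s)⁻¹ := by gcongr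

lemma prod_weight_le (ω : S.Path) (T : ℕ) : ∏ t ∈ Finset.range T, S.weight t (ω t) ≤
    ((continuant (S.digits ω) (T * S.N) : ℝ) ^ 2) ^ (-s) / S.slack T := by
  have hslack := fun t => zero_lt_one.trans_le (S.one_le_slack t)
  have hq := fun n => continuant_pos (S.one_le_digits ω) n
  induction T with
  | zero => simp [S.slack_zero, continuant]
  | succ T ih =>
    obtain ⟨r, hr, hle, hweight⟩ := S.exists_weight_mul_slack_le ω T
    set q : ℝ := (continuant (S.digits ω) (T * S.N) : ℝ)
    have := hslack T
    rw [le_div_iff₀ (hslack _), Finset.prod_range_succ]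
    calc (∏ t ∈ Finset.range T, S.weight t (ω t)) * S.weight T (ω T) * S.slack (T + 1)
        ≤ (q ^ 2) ^ (-s) / S.slack T * (S.slack T * (r ^ 2) ^ (-s)) := by
          rw [mul_assoc]
          refine mul_le_mul ih hweight ?_ (by positivity)
          exact mul_nonneg (S.weight_nonneg _ _) (hslack _).le
      _ = ((q * r) ^ 2) ^ (-s) := by
          rw [mul_pow, Real.mul_rpow (sq_nonneg _) (sq_nonneg _)]
          field_simp
      _ ≤ ((continuant (S.digits ω) ((T + 1) * S.N) : ℝ) ^ 2) ^ (-s) := by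
          refine Real.rpow_le_rpow_of_nonpos (pow_pos (hq _) 2) ?_ (by linarith [S.s_pos])
          gcongr

end BlockWeight

section SlabMeasure

lemma pathMeasure_digits_singleton (ω₀ : S.Path) :
    S.pathMeasure (S.digits ⁻¹' {S.digits ω₀}) = 0 := by
  have hbound : ∀ T : ℕ, S.pathMeasure (S.digits ⁻¹' {S.digits ω₀}) ≤
      ENNReal.ofReal (((continuant (S.digits ω₀) (T * S.N) : ℝ) ^ 2) ^ (-s)) := fun T => by
    refine (measure_mono (t := {ω : S.Path | (∀ t < T, ω t = ω₀ t) ∧ ω T ∈ univ}) fun ω hω =>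
      ⟨S.eq_of_digits_eq fun k _ => congrFun hω k, mem_univ _⟩).trans ?_
    rw [S.pathMeasure_cylinder, measure_univ, mul_one]
    exact ENNReal.ofReal_le_ofReal ((S.prod_weight_le ω₀ T).trans
      (div_le_self (by positivity) (S.one_le_slack T)))
  have hcont : Tendsto (fun T => continuant (S.digits ω₀) (T * S.N)) atTop atTop :=
    tendsto_atTop_mono (fun T => (Nat.le_mul_of_pos_right T S.N_pos).trans
      (le_continuant (S.one_le_digits ω₀) _)) tendsto_id
  have hlim : Tendsto (fun T =>
      ENNReal.ofReal (((continuant (S.digits ω₀) (T * S.N) : ℝ) ^ 2) ^ (-s))) atTop (nhds 0) := by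
    rw [← ENNReal.ofReal_zero]
    exact ENNReal.tendsto_ofReal ((tendsto_rpow_neg_atTop S.s_pos).comp
      ((tendsto_pow_atTop two_ne_zero).comp (tendsto_natCast_atTop_atTop.comp hcont)))
  exact nonpos_iff_eq_zero.mp (ge_of_tendsto' hlim hbound)

variable {T i : ℕ}

lemma pathMeasure_digitSlab_le (ω₀ : S.Path) (T : ℕ) (hi : i < S.N) (l : ℕ) :
    S.pathMeasure (S.digits ⁻¹' digitSlab (S.digits ω₀) (T * S.N + i) l) ≤
      ENNReal.ofReal (((continuant (S.digits ω₀) (T * S.N) : ℝ) ^ 2) ^ (-s) / S.slack T) *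
        (S.blockPMF T).toMeasure
          {w | (∀ j : Fin S.N, (j : ℕ) < i → w.1 j = S.digits ω₀ (T * S.N + j)) ∧
            ∀ j : Fin S.N, (j : ℕ) = i → w.1 j ∈ Icc (S.digits ω₀ (T * S.N + i)) l} := by
  refine le_trans ?_ (mul_le_mul_left (ENNReal.ofReal_le_ofReal (S.prod_weight_le ω₀ T)) _)
  rw [← S.pathMeasure_cylinder]
  refine measure_mono ?_
  rintro ω ⟨hprefix, hdigit⟩
  refine ⟨S.eq_of_digits_eq fun k hk => hprefix k (hk.trans_le (Nat.le_add_right _ _)),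
    fun j hj => ?_, fun j hj => ?_⟩
  · rw [← hprefix _ (Nat.add_lt_add_left hj _), S.digits_mul_add ω T j.2]
  · subst hj
    rwa [S.digits_mul_add ω T j.2] at hdigit

lemma rpow_mul_rpow_le_slack (h : S.IsForced T) (hi : i < m) :
    S.blockProd T (i + 1) ^ s * S.blockProd T i ^ (s - 1) ≤ S.slack T := by
  have := S.one_le_blockProd h hi.le
  have := S.one_le_blockProd h (i := i + 1) hi
  refine (le_mul_of_one_le_left (by positivity) ?_).trans (S.le_slack T h i hi)
  refine one_le_mul_of_one_le_of_one_le (one_le_pow₀ one_le_two) (one_le_pow₀ ?_)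
  exact one_le_mul_of_one_le_of_one_le (one_le_pow₀ (by norm_num)) (one_le_pow₀ one_le_two)

lemma le_digitGap_of_forced (h : S.IsForced T) (hi : i < m) (ω₀ : S.Path) {l : ℕ}
    (hl : l ∈ doubleIco (S.scale T i)) (hle : S.digits ω₀ (T * S.N + i) ≤ l) :
    ((l : ℝ) - S.digits ω₀ (T * S.N + i)) / (9 ^ (i + 1) * (S.scale T i *
        ((continuant (S.digits ω₀) (T * S.N) : ℝ) ^ 2 * S.blockProd T i ^ 2 * S.scale T i))) ≤
      digitGap (S.digits ω₀) (T * S.N + i) l := by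
  set q : ℝ := (continuant (S.digits ω₀) (T * S.N) : ℝ)
  have hlow := (mem_doubleIco.mp (S.digits_mem_doubleIco h ω₀ hi)).2
  have hhigh := (mem_doubleIco.mp hl).2
  have hx := S.two_le_scale T h i hi
  have := continuant_pos (S.one_le_digits ω₀) (T * S.N + i)
  have : (0 : ℝ) ≤ l - S.digits ω₀ (T * S.N + i) := sub_nonneg.mpr (Nat.cast_le.mpr hle)
  have hden : 9 ^ (i + 1) * (S.scale T i * (q ^ 2 * S.blockProd T i ^ 2 * S.scale T i)) =
      (q * (3 ^ i * S.blockProd T i)) ^ 2 * ((3 * S.scale T i) * (3 * S.scale T i)) := by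
    rw [pow_succ, show (9 : ℝ) = 3 ^ 2 by norm_num, ← pow_mul, mul_comm 2 i, pow_mul]
    ring
  rw [hden, digitGap]
  gcongr
  · exact S.continuant_forced_le h ω₀ hi.le
  · linarith
  · linarith

lemma pathMeasure_digitSlab_le_of_forced (h : S.IsForced T) (hi : i < m) (ω₀ : S.Path) {l : ℕ}
    (hl : l ∈ doubleIco (S.scale T i)) (hlt : S.digits ω₀ (T * S.N + i) < l) :
    S.pathMeasure (S.digits ⁻¹' digitSlab (S.digits ω₀) (T * S.N + i) l) ≤
      ENNReal.ofReal (2 ^ (i + 2) * (9 ^ (i + 1) *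
        digitGap (S.digits ω₀) (T * S.N + i) l ^ s)) := by
  set q : ℝ := (continuant (S.digits ω₀) (T * S.N) : ℝ)
  set y := S.blockProd T i
  set x := S.scale T i
  set k : ℝ := (l : ℝ) - S.digits ω₀ (T * S.N + i)
  have hk : 0 < k := sub_pos.mpr (Nat.cast_lt.mpr hlt)
  have hkx : k ≤ x := by
    linarith [(mem_doubleIco.mp (S.digits_mem_doubleIco h ω₀ hi)).1, (mem_doubleIco.mp hl).2]
  have hq : 0 < q := continuant_pos (S.one_le_digits ω₀) _
  have hx : 2 ≤ x := S.two_le_scale T h i hi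
  have hy : 1 ≤ y := S.one_le_blockProd h hi.le
  refine (S.pathMeasure_digitSlab_le ω₀ T (hi.trans_le S.le_N) _).trans ?_
  refine (mul_le_mul_right (S.blockPMF_toMeasure_le_of_forced h hi
    (fun j => S.digits ω₀ (T * S.N + j)) hlt) _).trans ?_
  have := S.one_le_slack T
  rw [← ENNReal.ofReal_mul (by positivity), blockProd_succ]
  refine ENNReal.ofReal_le_ofReal ?_
  rw [mul_left_comm]
  refine mul_le_mul_of_nonneg_left ?_ (by positivity)
  calc (q ^ 2) ^ (-s) / S.slack T * (k / (y * x))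
      ≤ (k / (x * (q ^ 2 * y ^ 2 * x))) ^ s :=
        rpow_neg_div_mul_le_rpow hq (by positivity) (by positivity) hk hkx S.s_le_one
          (S.blockProd_succ T i ▸ S.rpow_mul_rpow_le_slack h hi)
    _ = (9 ^ (i + 1) * (k / (9 ^ (i + 1) * (x * (q ^ 2 * y ^ 2 * x))))) ^ s := by
        field_simp
    _ ≤ 9 ^ (i + 1) * (k / (9 ^ (i + 1) * (x * (q ^ 2 * y ^ 2 * x)))) ^ s :=
        mul_rpow_le_mul (one_le_pow₀ (by norm_num)) (by positivity) S.s_le_one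
    _ ≤ 9 ^ (i + 1) * digitGap (S.digits ω₀) (T * S.N + i) l ^ s := by
        have := S.s_pos
        gcongr
        exact S.le_digitGap_of_forced h hi ω₀ hl hlt.le

lemma continuant_free_le (h : ¬ S.IsForced T) (ω : S.Path) (hi : i < S.N) :
    continuant (S.digits ω) (T * S.N + i) ≤
      continuant (S.digits ω) (T * S.N) * (S.digitBound + 1) ^ S.N := by
  refine (continuant_add_le_mul_prod (S.one_le_digits ω) _ i).trans (Nat.mul_le_mul_left _ ?_)
  calc ∏ j ∈ Finset.range i, (S.digits ω (T * S.N + j) + 1)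
      ≤ ∏ _j ∈ Finset.range i, (S.digitBound + 1) := Finset.prod_le_prod' fun j hj =>
        Nat.succ_le_succ (S.digits_le_digitBound h ω ((Finset.mem_range.mp hj).trans hi))
    _ = (S.digitBound + 1) ^ i := by rw [Finset.prod_const, Finset.card_range]
    _ ≤ (S.digitBound + 1) ^ S.N := Nat.pow_le_pow_right (Nat.succ_pos _) hi.le

lemma le_digitGap_of_free (h : ¬ S.IsForced T) (hi : i < S.N) (ω₀ : S.Path) {l : ℕ}
    (hl : l ≤ S.digitBound) (hlt : S.digits ω₀ (T * S.N + i) < l) :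
    1 / ((S.digitBound + 1 : ℝ) ^ (2 * S.N + 2) *
        (continuant (S.digits ω₀) (T * S.N) : ℝ) ^ 2) ≤
      digitGap (S.digits ω₀) (T * S.N + i) l := by
  set q : ℝ := (continuant (S.digits ω₀) (T * S.N) : ℝ) with hqdef
  have := continuant_pos (S.one_le_digits ω₀) (T * S.N + i)
  have hlow := S.digits_le_digitBound h ω₀ hi
  have hone : (1 : ℝ) ≤ l - S.digits ω₀ (T * S.N + i) := by
    rw [le_sub_iff_add_le']
    exact_mod_cast hlt
  have hcont : (continuant (S.digits ω₀) (T * S.N + i) : ℝ) ≤ q * (S.digitBound + 1) ^ S.N := by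
    rw [hqdef]
    exact_mod_cast S.continuant_free_le h ω₀ hi
  have hden : (S.digitBound + 1 : ℝ) ^ (2 * S.N + 2) * q ^ 2 =
      (q * (S.digitBound + 1) ^ S.N) ^ 2 * ((S.digitBound + 1) * (S.digitBound + 1)) := by
    ring
  rw [hden, digitGap]
  gcongr

lemma pathMeasure_digitSlab_le_of_free (h : ¬ S.IsForced T) (hi : i < S.N) (ω₀ : S.Path) {l : ℕ}
    (hl : l ≤ S.digitBound) (hlt : S.digits ω₀ (T * S.N + i) < l) :
    S.pathMeasure (S.digits ⁻¹' digitSlab (S.digits ω₀) (T * S.N + i) l) ≤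
      ENNReal.ofReal ((S.digitBound + 1 : ℝ) ^ (2 * S.N + 2) *
        digitGap (S.digits ω₀) (T * S.N + i) l ^ s) := by
  set q : ℝ := (continuant (S.digits ω₀) (T * S.N) : ℝ)
  set D : ℝ := (S.digitBound + 1 : ℝ) ^ (2 * S.N + 2)
  have hq : 0 < q := continuant_pos (S.one_le_digits ω₀) _
  have hD : 1 ≤ D := one_le_pow₀ (le_add_of_nonneg_left (Nat.cast_nonneg _))
  refine (S.pathMeasure_digitSlab_le ω₀ T hi _).trans ((mul_le_of_le_one_right' prob_le_one).trans
    (ENNReal.ofReal_le_ofReal ?_))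
  calc (q ^ 2) ^ (-s) / S.slack T ≤ (q ^ 2) ^ (-s) :=
        div_le_self (by positivity) (S.one_le_slack T)
    _ = (D * (1 / (D * q ^ 2))) ^ s := by
        rw [Real.rpow_neg (sq_nonneg q), ← Real.inv_rpow (sq_nonneg q)]
        field_simp
    _ ≤ D * (1 / (D * q ^ 2)) ^ s := mul_rpow_le_mul hD (by positivity) S.s_le_one
    _ ≤ D * digitGap (S.digits ω₀) (T * S.N + i) l ^ s := by
        have := S.s_pos
        gcongr
        exact S.le_digitGap_of_free h hi ω₀ hl hlt

/-- The constant of the mass distribution principle for `pathMeasure`. -/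
noncomputable def slabConst : ℝ :=
  2 ^ (m + 2) * 9 ^ (m + 1) + (S.digitBound + 1 : ℝ) ^ (2 * S.N + 2)

lemma slabConst_nonneg : 0 ≤ S.slabConst := by
  unfold slabConst
  positivity

lemma pathMeasure_digitSlab_le_slabConst (ω₀ ω₁ : S.Path) (p : ℕ)
    (hlt : S.digits ω₀ p < S.digits ω₁ p) :
    S.pathMeasure (S.digits ⁻¹' digitSlab (S.digits ω₀) p (S.digits ω₁ p)) ≤
      ENNReal.ofReal (S.slabConst * digitGap (S.digits ω₀) p (S.digits ω₁ p) ^ s) := by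
  obtain ⟨T, i, hi, rfl⟩ := S.exists_eq_mul_add p
  have hgap : 0 ≤ digitGap (S.digits ω₀) (T * S.N + i) (S.digits ω₁ (T * S.N + i)) :=
    div_nonneg (sub_nonneg.mpr (Nat.cast_le.mpr hlt.le)) (by positivity)
  by_cases h : S.IsForced T
  · rcases lt_or_ge i m with him | him
    · refine (S.pathMeasure_digitSlab_le_of_forced h him ω₀
        (S.digits_mem_doubleIco h ω₁ him) hlt).trans (ENNReal.ofReal_le_ofReal ?_)
      rw [← mul_assoc]
      gcongr
      refine le_trans ?_ (le_add_of_nonneg_right (by positivity))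
      gcongr <;> norm_num
    · rw [S.digits_eq_one h ω₀ him hi, S.digits_eq_one h ω₁ him hi] at hlt
      exact absurd hlt (lt_irrefl 1)
  · refine (S.pathMeasure_digitSlab_le_of_free h hi ω₀ (S.digits_le_digitBound h ω₁ hi) hlt).trans
      (ENNReal.ofReal_le_ofReal ?_)
    gcongr
    exact le_add_of_nonneg_left (by positivity)

end SlabMeasure

theorem hausdorffMeasure_ne_zero {E : Set ℝ}
    (hE : ∀ a : ℕ → ℕ, (∀ k, 1 ≤ a k) → (∀ t, S.IsForced t → ∀ j < m,
      a (t * S.N + j) ∈ doubleIco (S.scale t j)) → cfValue a ∈ E) :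
    μH[s] E ≠ 0 :=
  hausdorffMeasure_ne_zero_of_digitSlab_le S.measurable_digits S.one_le_digits S.one_le_digitBound
    S.digits_le_or_two_le S.bddAbove_range_digits S.s_pos.le S.slabConst_nonneg
    (fun ω ω' p _ hlt => S.pathMeasure_digitSlab_le_slabConst ω ω' p hlt)
    S.pathMeasure_digits_singleton
    fun ω => hE _ (S.one_le_digits ω) fun _ ht _ hj => S.digits_mem_doubleIco ht ω hj

end CantorScheme

/-- The block `t` of length `N` can be forced at slack `h`: its thresholds are at least `2`, and `h`
dominates the loss of mass in each of its first `m` digits. -/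
def IsAffordable (m : ℕ) (A c : ℕ → ℝ) (s : ℝ) (N t : ℕ) (h : ℝ) : Prop :=
  (∀ j < m, 2 ≤ digitScale A c (t * N + 1) j) ∧
    ∀ i < m, 2 ^ m * (3 ^ m * 2 ^ N) ^ 2 *
      (scaleProd A c (t * N + 1) (i + 1) ^ s * scaleProd A c (t * N + 1) i ^ (s - 1)) ≤ h

section Dimension

variable {m N : ℕ} {A c : ℕ → ℝ} {s : ℝ}

lemma monotone_isAffordable (t : ℕ) : Monotone (IsAffordable m A c s N t) :=
  fun _ _ hle h => ⟨h.1, fun i hi => (h.2 i hi).trans hle⟩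

lemma tendsto_digitScale_atTop {j : ℕ} (hA : 1 < A j) (hc : 0 < c j) :
    Tendsto (fun n => digitScale A c n j) atTop atTop :=
  (tendsto_pow_atTop_atTop_of_one_lt hA).const_mul_atTop hc

lemma eventually_mul_pow_le_pow {r z : ℝ} (hr : 0 ≤ r) (hrz : r < z) (K : ℝ) :
    ∀ᶠ j : ℕ in atTop, K * r ^ j ≤ z ^ j := by
  filter_upwards [((isLittleO_pow_pow_of_lt_left hr hrz).const_mul_left K).bound one_pos] with j hj
  rw [one_mul, Real.norm_of_nonneg (pow_nonneg (hr.trans hrz.le) j)] at hj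
  exact (le_abs_self _).trans hj

lemma eventually_isAffordable (hA : ∀ i < m, 1 < A i) (hc : ∀ i < m, 0 < c i) (hN : 0 < N) {z : ℝ}
    (hz : ∀ i < m, growthRatio A s i ^ N < z) (n : ℕ) :
    ∀ᶠ j in atTop, IsAffordable m A c s N (n + j) (z ^ j) := by
  have htime : Tendsto (fun j => (n + j) * N + 1) atTop atTop :=
    tendsto_atTop_mono (fun j => (Nat.le_add_left j n).trans
      ((Nat.le_mul_of_pos_right _ hN).trans (Nat.le_succ _))) tendsto_id
  have hscale : ∀ᶠ j in atTop, ∀ i ∈ Finset.range m, 2 ≤ digitScale A c ((n + j) * N + 1) i :=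
    (Finset.eventually_all _).mpr fun i hi =>
      have hi := Finset.mem_range.mp hi
      ((tendsto_digitScale_atTop (hA i hi) (hc i hi)).comp htime).eventually_ge_atTop 2
  have hcost : ∀ᶠ j in atTop, ∀ i ∈ Finset.range m, 2 ^ m * (3 ^ m * 2 ^ N) ^ 2 *
      (scaleProd A c ((n + j) * N + 1) (i + 1) ^ s * scaleProd A c ((n + j) * N + 1) i ^ (s - 1)) ≤
        z ^ j := by
    refine (Finset.eventually_all _).mpr fun i hi => ?_
    rw [Finset.mem_range] at hi
    filter_upwards [eventually_mul_pow_le_pow (pow_pos (growthRatio_pos hA s hi) N).le (hz i hi)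
      (2 ^ m * (3 ^ m * 2 ^ N) ^ 2 * (scaleProd A c 1 (i + 1) ^ s * scaleProd A c 1 i ^ (s - 1)) *
        (growthRatio A s i ^ N) ^ n)] with j hj
    refine le_of_eq_of_le ?_ hj
    rw [scaleProd_rpow_mul_rpow hA hc s _ _ hi, mul_comm (n + j) N, pow_mul, pow_add]
    ring
  filter_upwards [hscale, hcost] with j hscale hcost
  exact ⟨fun i hi => hscale i (Finset.mem_range.mpr hi),
    fun i hi => hcost i (Finset.mem_range.mpr hi)⟩

theorem exists_cantorScheme (hm : 0 < m) (hA : ∀ i < m, 1 < A i) (hc : ∀ i < m, 0 < c i)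
    (hs : 0 < s) (hs1 : s ≤ 1) (h : ∀ i < m, s < dimNum A i) :
    ∃ S : CantorScheme m s, S.scale = (fun t => digitScale A c (t * S.N + 1)) ∧
      ∃ᶠ t in atTop, S.IsForced t := by
  obtain ⟨N, hN, W, hW, hlt⟩ := exists_words hm hA hs.le h 4 (by norm_num)
  have hz (i : ℕ) (hi : i < m) : growthRatio A s i ^ N < wordMass s W / 4 := by
    linarith [hlt i hi]
  have hz1 : 1 ≤ wordMass s W / 4 :=
    (one_le_pow₀ (one_le_growthRatio_zero hm hA hs.le)).trans (hz 0 hm).le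
  have hforced := frequently_greedyCounter hz1 (monotone_isAffordable (m := m) (A := A) (c := c))
    fun n => (eventually_isAffordable hA hc (hm.trans_le hN) hz n).exists
  exact ⟨{
    N := N
    freeWords := W
    scale := fun t => digitScale A c (t * N + 1)
    IsForced := fun t => IsAffordable m A c s N t
      (greedyCounter (IsAffordable m A c s N) (wordMass s W / 4) t)
    slack := greedyCounter (IsAffordable m A c s N) (wordMass s W / 4)
    pos := hm
    le_N := hN
    s_pos := hs
    s_le_one := hs1
    one_le_of_mem := hW
    four_le_wordMass := (one_le_div four_pos).mp hz1
    two_le_scale := fun _ ht => ht.1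
    slack_zero := rfl
    slack_succ_of_forced := fun _ => greedyCounter_succ_of_pos
    slack_succ_of_free := fun _ => greedyCounter_succ_of_neg
    le_slack := fun _ ht => ht.2 }, rfl, hforced⟩

lemma cfValue_mem_largeDigitSet {a : ℕ → ℕ} (ha : ∀ k, 1 ≤ a k) (hirr : Irrational (cfValue a))
    (h : ∃ᶠ n in atTop, ∀ j < m, a (n + j) ∈ doubleIco (digitScale A c (n + 1) j)) :
    cfValue a ∈ largeDigitSet m A c := by
  refine mem_largeDigitSet_iff.mpr ⟨cfValue_mem_Ioo ha, hirr, h.mono fun n hn j hj => ?_⟩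
  rw [digit, pq_cfValue ha]
  exact hn j hj

/-- The Cantor set may contain rational points, which do not affect the dimension. -/
theorem ofReal_le_dimH_largeDigitSet (hm : 0 < m) (hA : ∀ i < m, 1 < A i) (hc : ∀ i < m, 0 < c i)
    (hs : 0 < s) (hs1 : s ≤ 1) (h : ∀ i < m, s < dimNum A i) :
    ENNReal.ofReal s ≤ dimH (largeDigitSet m A c) := by
  obtain ⟨S, hscale, hforced⟩ := exists_cantorScheme hm hA hc hs hs1 h
  have hstart : Tendsto (fun t => t * S.N) atTop atTop :=
    tendsto_id.atTop_mul_const' S.N_pos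
  have hne : μH[s] (largeDigitSet m A c ∪ range ((↑) : ℚ → ℝ)) ≠ 0 := by
    refine S.hausdorffMeasure_ne_zero fun a ha hdigits => ?_
    by_cases hirr : Irrational (cfValue a)
    · refine Or.inl (cfValue_mem_largeDigitSet ha hirr (hstart.frequently ?_))
      exact hforced.mono fun t ht j hj => by simpa only [hscale] using hdigits t ht j hj
    · exact Or.inr (not_not.mp hirr)
  have hdim := le_dimH_of_hausdorffMeasure_ne_zero (d := s.toNNReal)
    (by rwa [Real.coe_toNNReal s hs.le])
  rwa [dimH_union, dimH_countable (countable_range _), max_eq_left zero_le] at hdim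

end Dimension

theorem hausdorff_dim_Sm (m : ℕ) (hm : 1 ≤ m) (A c : ℕ → ℝ)
    (hA : ∀ i < m, 1 < A i) (hc : ∀ i < m, 0 < c i) :
    dimH {x : ℝ | x ∈ Set.Ioo (0 : ℝ) 1 ∧ Irrational x ∧
      {n : ℕ | ∀ i < m, c i * A i ^ n ≤ (pq x (n + i) : ℝ) ∧
        (pq x (n + i) : ℝ) < 2 * (c i * A i ^ n)}.Infinite} =
    ENNReal.ofReal
      ((Finset.range m).inf' (Finset.nonempty_range_iff.mpr (by omega)) (dimNum A)) := by
  change dimH (largeDigitSet m A c) = _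
  refine le_antisymm ?_ (ofReal_le_of_forall_lt fun s hs hlt => ?_)
  · obtain ⟨i, hi, hmin⟩ :=
      Finset.exists_mem_eq_inf' (Finset.nonempty_range_iff.mpr (Nat.ne_zero_of_lt hm)) (dimNum A)
    exact hmin ▸ dimH_largeDigitSet_le_dimNum hA hc (Finset.mem_range.mp hi)
  · have hs_lt : ∀ i < m, s < dimNum A i := fun i hi =>
      (Finset.lt_inf'_iff _).mp hlt i (Finset.mem_range.mpr hi)
    have hs_le : s ≤ 1 := (hs_lt 0 hm).le.trans <|
      (dimNum_eq_gExp A 0).trans_le (gExp_le_one (one_lt_partialProd_succ hA hm).le _)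
    exact ofReal_le_dimH_largeDigitSet hm hA hc hs hs_le hs_lt
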